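/- arXiv:0907.0175 — 2 statements merged into one kernel-verified Lean document; each statement's English description precedes it below -/
import Mathlib

section
/- Consider a family of ℓ non-self-crossing curves and p points in the plane. Let m_1 be the maximum number of curves passing through any fixed pair of distinct points, and let m_2 be the average over unordered pairs of curves of the number of their intersection points, m_2 = C(ℓ,2)^{-1} ∑_{{c_1,c_2}} |c_1 ∩ c_2|. Then the number of point–curve incidences I satisfies I ≪ (m_1 m_2)^{1/3} (pℓ)^{2/3} + ℓ + m_1 p. -/
attribute [local instance] Classical.propDecidable
open Finset

/-!
Székely's argument: the arcs of the curves between consecutive points of `P` are the edges of a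
multigraph drawn on `P`. A curve with `k` incidences contributes at least `k - 1` edges, at most
`m₁` edges join two given points, and two crossing edges determine a common point of their two
curves lying in the interiors of both arcs, so there are at most `∑ |c₁ ∩ c₂|` crossings. The
crossing lemma for multigraphs bounds the number of edges.

Deleting one edge from every crossing pair and sampling reduce the crossing lemma to the statement
that a simple graph drawn without crossings has `O(n)` edges. No planarity theory is needed for the
latter. A dense simple graph has a `K₅` minor, by Mader's contraction argument. Joining the branch
sets along the drawing gives ten paths `γ i j` between five points `x i` of the plane, of which
those without a common end are disjoint. The increments `w i j k` of `log (γ i j - x k)` along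
`γ i j` satisfy the reciprocity law `w i j k - w i j l = w k l i - w k l j`, because
`log (γ i j s - γ k l t)` has a continuous branch on the `(s, t)`-plane, and this law is
incompatible with the values `exp (w i j k) = (x j - x k) / (x i - x k)`.
-/

section LogIncrement

/-- The change of `log f` from `0` to `1`, computed with any continuous branch of `log f`;
it is `0` if there is no such branch. -/
noncomputable def logIncrement (f : ℝ → ℂ) : ℂ :=
  if h : ∃ L : ℝ → ℂ, Continuous L ∧ ∀ t, Complex.exp (L t) = f t then h.choose 1 - h.choose 0
  else 0

lemma exists_continuous_log {A : Type*} [TopologicalSpace A] [SimplyConnectedSpace A]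
    [LocallyPathConnectedSpace A] {f : A → ℂ} (hf : Continuous f) (hf₀ : ∀ a, f a ≠ 0) :
    ∃ L : A → ℂ, Continuous L ∧ ∀ a, Complex.exp (L a) = f a := by
  obtain ⟨a₀⟩ : Nonempty A := inferInstance
  obtain ⟨L, ⟨-, hL⟩, -⟩ := Complex.isCoveringMapOn_exp.existsUnique_continuousMap_lifts
    ⟨f, hf⟩ (Complex.exp_log (hf₀ a₀)) hf₀
  exact ⟨L, L.continuous, congrFun hL⟩

lemma sub_eq_sub_of_exp_eq_mul_exp {A : Type*} [TopologicalSpace A] [PreconnectedSpace A]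
    {L M : A → ℂ} (hL : Continuous L) (hM : Continuous M) {c : ℂ}
    (h : ∀ t, Complex.exp (L t) = c * Complex.exp (M t)) (s t : A) : L s - L t = M s - M t := by
  have hconst : ∀ t, Complex.exp (L t - M t) = c := fun t => by
    rw [Complex.exp_sub, h t, mul_div_cancel_right₀ _ (Complex.exp_ne_zero _)]
  have hst : L s - M s = L t - M t :=
    Complex.isCoveringMap_exp.isSeparatedMap.const_of_comp
      Complex.isCoveringMap_exp.isLocalHomeomorph.isLocallyInjective
      (hL.sub hM) (fun s t => by ext; simp [hconst]) s t
  linear_combination hst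

lemma logIncrement_eq {f L : ℝ → ℂ} (hL : Continuous L) {c : ℂ}
    (h : ∀ t, Complex.exp (L t) = c * f t) : logIncrement f = L 1 - L 0 := by
  have hc : c ≠ 0 := left_ne_zero_of_mul (h 0 ▸ Complex.exp_ne_zero (L 0))
  have hf : ∃ M : ℝ → ℂ, Continuous M ∧ ∀ t, Complex.exp (M t) = f t :=
    ⟨fun t => L t - Complex.log c, hL.sub continuous_const, fun t => by
      rw [Complex.exp_sub, Complex.exp_log hc, h t, mul_div_cancel_left₀ _ hc]⟩
  rw [logIncrement, dif_pos hf]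
  exact (sub_eq_sub_of_exp_eq_mul_exp hL hf.choose_spec.1
    (fun t => by rw [h t, hf.choose_spec.2 t]) 1 0).symm

lemma exp_logIncrement {f : ℝ → ℂ} (hf : Continuous f) (hf₀ : ∀ t, f t ≠ 0) :
    Complex.exp (logIncrement f) = f 1 / f 0 := by
  obtain ⟨L, hL, hexp⟩ := exists_continuous_log hf hf₀
  rw [logIncrement_eq (c := 1) hL (by simpa using hexp), Complex.exp_sub, hexp, hexp]

lemma logIncrement_sub_logIncrement {p q : ℝ → ℂ} (hp : Continuous p) (hq : Continuous q)
    (hpq : ∀ s t, p s ≠ q t) :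
    logIncrement (fun s => p s - q 0) - logIncrement (fun s => p s - q 1) =
      logIncrement (fun t => q t - p 0) - logIncrement (fun t => q t - p 1) := by
  obtain ⟨L, hL, hexp⟩ := exists_continuous_log (A := ℝ × ℝ) (f := fun z => p z.1 - q z.2)
    (by fun_prop) (fun z => sub_ne_zero.mpr (hpq z.1 z.2))
  have hrow (t : ℝ) : logIncrement (fun s => p s - q t) = L (1, t) - L (0, t) :=
    logIncrement_eq (L := fun s => L (s, t)) (c := 1) (by fun_prop) (by simp [hexp])
  have hcol (s : ℝ) : logIncrement (fun t => q t - p s) = L (s, 1) - L (s, 0) :=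
    logIncrement_eq (L := fun t => L (s, t)) (c := -1) (by fun_prop) (by simp [hexp])
  rw [hrow, hrow, hcol, hcol]
  ring

end LogIncrement

section NonplanarK5

lemma crossRatio_mul_crossRatio_mul_crossRatio {K : Type*} [Field K] {a b c d : K} (hab : a ≠ b)
    (hac : a ≠ c) (had : a ≠ d) (hbc : b ≠ c) (hbd : b ≠ d) (hcd : c ≠ d) :
    (b - c) / (a - c) / ((b - d) / (a - d)) * ((c - d) / (a - d) / ((c - b) / (a - b))) *
      ((d - b) / (a - b) / ((d - c) / (a - c))) = -1 := by
  have := sub_ne_zero.mpr hab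
  have := sub_ne_zero.mpr hac
  have := sub_ne_zero.mpr had
  have := sub_ne_zero.mpr hbc
  have := sub_ne_zero.mpr hbd
  have := sub_ne_zero.mpr hcd
  rw [← neg_sub b c, ← neg_sub b d, ← neg_sub c d]
  field_simp

/- Summed over the three pairings of four vertices, the differences `w i j k - w i j l` give a
logarithm of `-1`; the alternating sum of these over the five quadruples vanishes. -/
lemma not_forall_log_reciprocity {x : Fin 5 → ℂ} (hx : Function.Injective x)
    {w : Fin 5 → Fin 5 → Fin 5 → ℂ}
    (hexp : ∀ i j k, [i, j, k].Nodup → Complex.exp (w i j k) = (x j - x k) / (x i - x k)) :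
    ¬ ∀ i j k l, [i, j, k, l].Nodup → w i j k - w i j l = w k l i - w k l j := by
  intro hw
  let B i j k l := (w i j k - w i j l) + (w i k l - w i k j) + (w i l j - w i l k)
  have hB : ∀ i j k l, [i, j, k, l].Nodup → Complex.exp (B i j k l) = -1 := by
    intro i j k l h
    have hne {a b : Fin 5} (hab : a ≠ b) : x a ≠ x b := hx.ne hab
    simp only [List.nodup_cons, List.mem_cons, not_or] at h
    simp only [B, Complex.exp_add, Complex.exp_sub]
    rw [hexp, hexp, hexp, hexp, hexp, hexp]
    · apply crossRatio_mul_crossRatio_mul_crossRatio <;> apply hne <;> tauto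
    all_goals simp only [List.nodup_cons, List.mem_cons, not_or]; tauto
  have hsum : B 1 2 3 4 - B 0 2 3 4 + B 0 1 3 4 - B 0 1 2 4 + B 0 1 2 3 = 0 := by
    simp only [B]
    linear_combination (1 / 2 : ℂ) *
      (hw 1 2 3 4 (by simp) - hw 1 3 2 4 (by simp) + hw 1 4 2 3 (by simp)
        - hw 0 2 3 4 (by simp) + hw 0 3 2 4 (by simp) - hw 0 4 2 3 (by simp)
        + hw 0 1 3 4 (by simp) - hw 0 3 1 4 (by simp) + hw 0 4 1 3 (by simp)
        - hw 0 1 2 4 (by simp) + hw 0 2 1 4 (by simp) - hw 0 4 1 2 (by simp)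
        + hw 0 1 2 3 (by simp) - hw 0 2 1 3 (by simp) + hw 0 3 1 2 (by simp))
  have hone := congrArg Complex.exp hsum
  rw [Complex.exp_add, Complex.exp_sub, Complex.exp_add, Complex.exp_sub, hB _ _ _ _ (by simp),
    hB _ _ _ _ (by simp), hB _ _ _ _ (by simp), hB _ _ _ _ (by simp), hB _ _ _ _ (by simp),
    Complex.exp_zero] at hone
  norm_num at hone

theorem exists_path_inter_path_nonempty {x : Fin 5 → ℂ} (g : ∀ i j, Path (x i) (x j)) :
    ∃ i j k l, [i, j, k, l].Nodup ∧ (Set.range (g i j) ∩ Set.range (g k l)).Nonempty := by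
  by_contra! hdisj
  have hne : ∀ i j k l, [i, j, k, l].Nodup → ∀ s t, (g i j).extend s ≠ (g k l).extend t :=
    fun i j k l h s t hst => Set.notMem_empty ((g i j).extend s) <| hdisj i j k l h ▸
      ⟨(g i j).extend_range ▸ ⟨s, rfl⟩, (g k l).extend_range ▸ ⟨t, hst.symm⟩⟩
  have hfifth (i j k : Fin 5) : ∃ l, l ≠ i ∧ l ≠ j ∧ l ≠ k := by
    by_contra! h
    have hsub : (univ : Finset (Fin 5)) ⊆ {i, j, k} := fun l _ => by
      simp only [mem_insert, mem_singleton]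
      tauto
    simpa using (card_le_card hsub).trans card_le_three
  have havoid : ∀ i j k, [i, j, k].Nodup → ∀ s, (g i j).extend s ≠ x k := by
    intro i j k h s
    obtain ⟨l, hli, hlj, hlk⟩ := hfifth i j k
    simpa using hne i j k l (by simp at h ⊢; grind) s 0
  have hx : Function.Injective x := by
    intro i k hik
    by_contra hik'
    obtain ⟨j, hji, hjk, -⟩ := hfifth i k k
    exact havoid i j k (by simp; grind) 0 (by simpa using hik)
  refine not_forall_log_reciprocity hx (w := fun i j k => logIncrement fun s =>
    (g i j).extend s - x k) (fun i j k h => ?_) (fun i j k l h => ?_)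
  · have := exp_logIncrement (f := fun s => (g i j).extend s - x k) (by fun_prop)
      (fun s => sub_ne_zero.mpr (havoid i j k h s))
    simpa using this
  · have := logIncrement_sub_logIncrement (g i j).continuous_extend (g k l).continuous_extend
      (hne i j k l h)
    simpa using this

theorem exists_inter_nonempty_of_joinedIn {x : Fin 5 → ℝ × ℝ} {W : Fin 5 → Fin 5 → Set (ℝ × ℝ)}
    (hW : ∀ i j, i ≠ j → JoinedIn (W i j) (x i) (x j)) :
    ∃ i j k l, [i, j, k, l].Nodup ∧ (W i j ∩ W k l).Nonempty := by
  have hpath (i j : Fin 5) : ∃ p : Path (x i) (x j), i ≠ j → Set.range p ⊆ W i j := by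
    by_cases hij : i = j
    · exact hij ▸ ⟨Path.refl (x i), fun h => absurd rfl h⟩
    · exact ⟨(hW i j hij).somePath, fun _ => Set.range_subset_iff.mpr (hW i j hij).somePath_mem⟩
  choose p hp using hpath
  let e := Complex.equivRealProdCLM.symm
  obtain ⟨i, j, k, l, hnodup, -, ⟨s, rfl⟩, ⟨t, ht⟩⟩ :=
    exists_path_inter_path_nonempty (fun i j => (p i j).map e.continuous)
  refine ⟨i, j, k, l, hnodup, p i j s, hp i j (by simp at hnodup; tauto) ⟨s, rfl⟩,
    hp k l (by simp at hnodup; tauto) ⟨t, e.injective ht⟩⟩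

end NonplanarK5

section CliqueMinor

variable {V : Type*} {G : SimpleGraph V}

/-- `B` consists of the branch sets of a complete minor of `G` with vertex set `ι`: the `B i` are
connected, pairwise disjoint and pairwise joined by an edge. -/
structure IsCliqueMinor {ι : Type*} (G : SimpleGraph V) (B : ι → Set V) : Prop where
  connected : ∀ i, (G.induce (B i)).Connected
  disjoint : ∀ i j, i ≠ j → Disjoint (B i) (B j)
  adj : ∀ i j, i ≠ j → ∃ a ∈ B i, ∃ b ∈ B j, G.Adj a b

lemma IsCliqueMinor.cons {t : ℕ} {B : Fin t → Set V} (hB : IsCliqueMinor G B) {U : Set V}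
    (hU : (G.induce U).Connected) (hdisj : ∀ i, Disjoint U (B i))
    (hadj : ∀ i, ∃ a ∈ U, ∃ b ∈ B i, G.Adj a b) :
    IsCliqueMinor G (Fin.cons U B : Fin (t + 1) → Set V) where
  connected := Fin.cases hU hB.connected
  disjoint := by
    refine Fin.cases (Fin.cases (absurd rfl) fun j _ => hdisj j) fun i =>
      Fin.cases (fun _ => (hdisj i).symm) fun j hij => hB.disjoint i j (by simpa using hij)
  adj := by
    refine Fin.cases (Fin.cases (absurd rfl) fun j _ => hadj j) fun i =>
      Fin.cases (fun _ => ?_) fun j hij => hB.adj i j (by simpa using hij)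
    obtain ⟨a, ha, b, hb, hab⟩ := hadj i
    exact ⟨b, hb, a, ha, hab.symm⟩

/-- The neighbours in `S \ U` of the set `U`: these are the neighbours of the new vertex when `U` is
contracted inside `G[S]`. -/
noncomputable def outerNbrs (G : SimpleGraph V) (S U : Finset V) : Finset V :=
  {v ∈ S \ U | ∃ u ∈ U, G.Adj u v}

/-- Twice the number of edges of the graph obtained from `G[S]` by contracting `U` to a vertex. -/
noncomputable def contractedDegreeSum (G : SimpleGraph V) (S U : Finset V) : ℕ :=
  #(G.interedges (S \ U) (S \ U)) + 2 * #(outerNbrs G S U)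

lemma card_interedges_eq_sum (G : SimpleGraph V) (S T : Finset V) :
    #(G.interedges S T) = ∑ v ∈ S, #{w ∈ T | G.Adj v w} := by
  simp only [SimpleGraph.interedges_def, card_filter, sum_product]

lemma card_interedges_erase_add (G : SimpleGraph V) {S : Finset V} {v : V} (hv : v ∈ S) :
    #(G.interedges (S.erase v) (S.erase v)) + 2 * #{w ∈ S | G.Adj v w} = #(G.interedges S S) := by
  have hdeg (u : V) :
      #{w ∈ S | G.Adj u w} = #{w ∈ S.erase v | G.Adj u w} + if G.Adj v u then 1 else 0 := by
    simp only [card_filter, ← sum_erase_add S _ hv, G.adj_comm u v]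
  have herase : #{w ∈ S.erase v | G.Adj v w} = #{w ∈ S | G.Adj v w} := by simp [hdeg v]
  rw [card_interedges_eq_sum, card_interedges_eq_sum, ← sum_erase_add S _ hv,
    sum_congr rfl fun u _ => hdeg u, sum_add_distrib, ← card_filter, herase]
  ring

lemma contractedDegreeSum_singleton (G : SimpleGraph V) {S : Finset V} {u : V} (hu : u ∈ S) :
    contractedDegreeSum G S {u} = #(G.interedges S S) := by
  have : outerNbrs G S {u} = {w ∈ S | G.Adj u w} := by
    ext w
    have : G.Adj u w → w ≠ u := fun h => h.ne'
    simp [outerNbrs]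
    tauto
  rw [contractedDegreeSum, this, sdiff_singleton_eq_erase, card_interedges_erase_add G hu]

/- Contracting an edge loses it, together with one edge of each triangle on it. -/
lemma contractedDegreeSum_insert_add (G : SimpleGraph V) {S U : Finset V} {v : V}
    (hv : v ∈ outerNbrs G S U) :
    contractedDegreeSum G S (insert v U) + 2 * (1 + #{w ∈ outerNbrs G S U | G.Adj v w}) =
      contractedDegreeSum G S U := by
  have hvS : v ∈ S \ U := (mem_filter.mp hv).1
  have hunion : (outerNbrs G S U).erase v ∪ {w ∈ S \ U | G.Adj v w} =
      outerNbrs G S (insert v U) := by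
    ext w
    have : G.Adj v w → w ≠ v := fun h => h.ne'
    simp only [outerNbrs, mem_union, mem_erase, mem_filter, mem_sdiff, mem_insert,
      exists_eq_or_imp]
    grind
  have hinter : (outerNbrs G S U).erase v ∩ {w ∈ S \ U | G.Adj v w} =
      {w ∈ outerNbrs G S U | G.Adj v w} := by
    ext w
    have : G.Adj v w → w ≠ v := fun h => h.ne'
    simp only [outerNbrs, mem_inter, mem_erase, mem_filter]
    tauto
  have hcard := card_union_add_card_inter ((outerNbrs G S U).erase v) {w ∈ S \ U | G.Adj v w}
  rw [hunion, hinter, card_erase_of_mem hv] at hcard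
  have hpos : 0 < #(outerNbrs G S U) := card_pos.mpr ⟨v, hv⟩
  have hedges := card_interedges_erase_add G hvS
  rw [contractedDegreeSum, contractedDegreeSum, sdiff_insert]
  omega

lemma connected_induce_singleton {v : V} : (G.induce {v}).Connected :=
  SimpleGraph.Connected.of_subsingleton

lemma connected_induce_insert {S U : Finset V} {v : V} (hU : (G.induce (U : Set V)).Connected)
    (hv : v ∈ outerNbrs G S U) : (G.induce (insert v U : Finset V)).Connected := by
  obtain ⟨u, hu, huv⟩ := (mem_filter.mp hv).2
  rw [coe_insert, Set.insert_eq]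
  exact SimpleGraph.connected_induce_union connected_induce_singleton.preconnected
    hU.preconnected rfl hu huv.symm

/- A set `U` that is maximal among the connected sets whose contraction keeps the edge density
cannot be enlarged by any neighbour `v`, so the edge joining `v` to the contracted vertex lies in at
least `c` triangles. -/
lemma exists_connected_forall_le_card_common_nbrs {c : ℕ} {S : Finset V} (hS : S.Nonempty)
    (hcard : 2 * c * #S ≤ #(G.interedges S S)) :
    ∃ U ⊆ S, (G.induce (U : Set V)).Connected ∧
      2 * c * (#(S \ U) + 1) ≤ contractedDegreeSum G S U ∧
      ∀ v ∈ outerNbrs G S U, c ≤ #{w ∈ outerNbrs G S U | G.Adj v w} := by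
  let family : Finset (Finset V) := {U ∈ S.powerset |
    (G.induce (U : Set V)).Connected ∧ 2 * c * (#(S \ U) + 1) ≤ contractedDegreeSum G S U}
  obtain ⟨u, hu⟩ := hS
  have hsingleton : {u} ∈ family := by
    refine mem_filter.mpr ⟨by simpa using hu, ?_, ?_⟩
    · rw [coe_singleton]
      exact connected_induce_singleton
    · rwa [contractedDegreeSum_singleton G hu, sdiff_singleton_eq_erase, card_erase_add_one hu]
  obtain ⟨U, -, hU⟩ := family.exists_le_maximal hsingleton
  obtain ⟨hUS, hconn, hle⟩ : U ⊆ S ∧ _ := by simpa only [family, mem_filter, mem_powerset]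
    using hU.prop
  refine ⟨U, hUS, hconn, hle, fun v hv => ?_⟩
  obtain ⟨hvS, hvU⟩ := mem_sdiff.mp (mem_filter.mp hv).1
  by_contra! hlt
  have hinsert : insert v U ∈ family := by
    have hcontract := contractedDegreeSum_insert_add G hv
    have herase := card_erase_add_one (mem_sdiff.mpr ⟨hvS, hvU⟩)
    rw [← sdiff_insert] at herase
    refine mem_filter.mpr ⟨mem_powerset.mpr (insert_subset hvS hUS),
      connected_induce_insert hconn hv, ?_⟩
    nlinarith
  exact hvU (hU.le_of_ge hinsert (subset_insert v U) (mem_insert_self v U))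

lemma exists_connected_joined_to_dense {c : ℕ} (hc : 0 < c) {S : Finset V} (hS : S.Nonempty)
    (hcard : 2 * c * #S ≤ #(G.interedges S S)) :
    ∃ U ⊆ S, ∃ N ⊆ S, Disjoint U N ∧ (G.induce (U : Set V)).Connected ∧ N.Nonempty ∧
      ∀ v ∈ N, (∃ u ∈ U, G.Adj u v) ∧ c ≤ #{w ∈ N | G.Adj v w} := by
  induction S using Finset.strongInduction with
  | H S ih =>
  obtain ⟨U, hUS, hconn, hle, hnbrs⟩ := exists_connected_forall_le_card_common_nbrs hS hcard
  obtain hN | hN := (outerNbrs G S U).eq_empty_or_nonempty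
  · rw [contractedDegreeSum, hN, card_empty, mul_zero, add_zero] at hle
    have hpos : 0 < #(G.interedges (S \ U) (S \ U)) := by nlinarith
    have hne : (S \ U).Nonempty := by
      obtain ⟨e, he⟩ := card_pos.mp hpos
      exact ⟨e.1, (G.mem_interedges_iff.mp he).1⟩
    have hUne : U.Nonempty := Set.nonempty_coe_sort.mp hconn.nonempty
    obtain ⟨U', hU', N, hNS, h⟩ := ih (S \ U) (sdiff_ssubset hUS hUne) hne (by nlinarith)
    exact ⟨U', hU'.trans sdiff_subset, N, hNS.trans sdiff_subset, h⟩
  · exact ⟨U, hUS, outerNbrs G S U, (filter_subset _ _).trans sdiff_subset,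
      disjoint_sdiff.mono_right (filter_subset _ _), hconn, hN,
      fun v hv => ⟨(mem_filter.mp hv).2, hnbrs v hv⟩⟩

lemma exists_isCliqueMinor (t : ℕ) {S : Finset V} (hS : S.Nonempty)
    (hcard : 2 ^ t * #S ≤ #(G.interedges S S)) :
    ∃ B : Fin t → Set V, IsCliqueMinor G B ∧ ∀ i, B i ⊆ S := by
  induction t generalizing S with
  | zero => exact ⟨Fin.elim0, ⟨fun i => i.elim0, fun i => i.elim0, fun i => i.elim0⟩,
      fun i => i.elim0⟩
  | succ t ih =>
    obtain ⟨U, hUS, N, hNS, hUN, hU, hN, hnbrs⟩ :=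
      exists_connected_joined_to_dense (c := 2 ^ t) (by positivity) hS
        (by rwa [← pow_succ'])
    obtain ⟨B, hB, hBN⟩ := ih hN (by
      rw [card_interedges_eq_sum, mul_comm, ← smul_eq_mul]
      exact card_nsmul_le_sum N _ _ fun v hv => (hnbrs v hv).2)
    refine ⟨Fin.cons U B, hB.cons hU (fun i => ?_) (fun i => ?_), Fin.cases hUS fun i => ?_⟩
    · exact (disjoint_coe.mpr hUN).mono_right (hBN i)
    · obtain ⟨⟨v, hv⟩⟩ := (hB.connected i).nonempty
      obtain ⟨u, hu, huv⟩ := (hnbrs v (hBN i hv)).1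
      exact ⟨u, hu, v, hv, huv⟩
    · exact (hBN i).trans (coe_subset.mpr hNS)

end CliqueMinor

section Sampling

variable {α β ι : Type*} [Fintype α] [DecidableEq α] [Fintype β]

lemma card_filter_forall_mem_eq_mul (T : Finset α) (h : α → β) :
    #{ω : α → β | ∀ a ∈ T, ω a = h a} * Fintype.card β ^ #T = Fintype.card β ^ Fintype.card α := by
  have hpi : ({ω : α → β | ∀ a ∈ T, ω a = h a} : Finset (α → β)) =
      Fintype.piFinset fun a => if a ∈ T then {h a} else univ := by
    ext ω
    simp only [mem_filter_univ, Fintype.mem_piFinset]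
    exact forall_congr' fun a => by split_ifs with ha <;> simp [ha]
  have hT : Fintype.card β ^ #T = ∏ a, if a ∈ T then Fintype.card β else 1 := by
    simp
  rw [hpi, Fintype.card_piFinset, hT, ← prod_mul_distrib, ← card_univ (α := α), ← prod_const]
  exact prod_congr rfl fun a _ => by split_ifs <;> simp

lemma sum_card_filter_forall_mem_eq_mul (J : Finset ι) {T : ι → Finset α} {k : ℕ}
    (hT : ∀ j ∈ J, #(T j) = k) (h : ι → α → β) :
    (∑ ω : α → β, #{j ∈ J | ∀ a ∈ T j, ω a = h j a}) * Fintype.card β ^ k =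
      #J * Fintype.card β ^ Fintype.card α := by
  have hswap : ∑ ω : α → β, #{j ∈ J | ∀ a ∈ T j, ω a = h j a} =
      ∑ j ∈ J, #{ω : α → β | ∀ a ∈ T j, ω a = h j a} := by
    simp only [card_filter]
    exact sum_comm
  rw [hswap, sum_mul, card_eq_sum_ones, sum_mul]
  refine sum_congr rfl fun j hj => ?_
  rw [one_mul, ← hT j hj, card_filter_forall_mem_eq_mul]

end Sampling

lemma exists_injective_prodMk_fin {E κ : Type*} [Fintype E] [DecidableEq κ] (f : E → κ) {m : ℕ}
    (hm : ∀ z, #{e | f e = z} ≤ m) :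
    ∃ lab : E → Fin m, Function.Injective fun e => (f e, lab e) := by
  have hφ (z : κ) : ∃ φ : {e // f e = z} → Fin m, Function.Injective φ := by
    obtain ⟨φ⟩ : Nonempty ({e // f e = z} ↪ Fin m) :=
      Function.Embedding.nonempty_of_card_le (by simpa [Fintype.card_subtype] using hm z)
    exact ⟨φ, φ.injective⟩
  choose φ hφ using hφ
  refine ⟨fun e => φ (f e) ⟨e, rfl⟩, ?_⟩
  intro e e' h
  obtain ⟨hf, hlab⟩ := Prod.mk.inj h
  have hcongr {z : κ} (h : f e' = z) : φ (f e') ⟨e', rfl⟩ = φ z ⟨e', h⟩ := by subst h; rfl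
  exact congrArg Subtype.val (hφ (f e) (hlab.trans (hcongr hf.symm)))

/-- A drawing in `X` of a loopless multigraph with vertex type `V` and edge type `E`. The set
`arc e` stands for the closed arc of `e`; all that is required of it is that it joins the ends of
`e`. -/
structure Drawing (V E X : Type*) [TopologicalSpace X] where
  pos : V → X
  ends : E → Sym2 V
  arc : E → Set X
  not_isDiag : ∀ e, ¬ (ends e).IsDiag
  joinedIn : ∀ e, ∀ a ∈ ends e, ∀ b ∈ ends e, JoinedIn (arc e) (pos a) (pos b)

namespace Drawing

variable {V E X : Type*} [TopologicalSpace X]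

/-- The simple graph underlying the edges in `F`. -/
def graph (D : Drawing V E X) (F : Set E) : SimpleGraph V :=
  SimpleGraph.fromEdgeSet (D.ends '' F)

/-- Two edges cross if they have no common end and their arcs meet. -/
def Cross (D : Drawing V E X) (e f : E) : Prop :=
  (∀ a ∈ D.ends e, a ∉ D.ends f) ∧ (D.arc e ∩ D.arc f).Nonempty

/-- The ordered pairs of crossing edges in `F`. -/
noncomputable def crossings (D : Drawing V E X) (F : Finset E) : Finset (E × E) :=
  {q ∈ F ×ˢ F | D.Cross q.1 q.2}

/-- The union of the arcs of the edges in `F` with both ends in `C`. -/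
def arcsWithin (D : Drawing V E X) (F : Set E) (C : Set V) : Set X :=
  ⋃ e ∈ {e ∈ F | ∀ v ∈ D.ends e, v ∈ C}, D.arc e

lemma joinedIn_arcsWithin (D : Drawing V E X) {F : Set E} {C : Set V}
    (hC : ((D.graph F).induce C).Connected) {a b : V} (ha : a ∈ C) (hb : b ∈ C) (hab : a ≠ b) :
    JoinedIn (D.arcsWithin F C) (D.pos a) (D.pos b) := by
  have hadj {u v : V} (hu : u ∈ C) (hv : v ∈ C) (huv : (D.graph F).Adj u v) :
      JoinedIn (D.arcsWithin F C) (D.pos u) (D.pos v) := by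
    obtain ⟨⟨e, he, hends⟩, -⟩ := (SimpleGraph.fromEdgeSet_adj _).mp huv
    refine (D.joinedIn e u (by simp [hends]) v (by simp [hends])).mono ?_
    refine Set.subset_biUnion_of_mem (u := D.arc) ⟨he, fun w hw => ?_⟩
    rw [hends, Sym2.mem_iff] at hw
    rcases hw with rfl | rfl <;> assumption
  obtain ⟨p⟩ := hC.preconnected ⟨a, ha⟩ ⟨b, hb⟩
  suffices h : ∀ {u v : C}, ((D.graph F).induce C).Walk u v → u ≠ v →
      JoinedIn (D.arcsWithin F C) (D.pos u) (D.pos v) from h p (by simpa using hab)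
  intro u v p
  induction p with
  | nil => exact fun h => absurd rfl h
  | @cons u v w huv _ ih =>
    intro _
    have huv' := hadj u.2 v.2 huv
    obtain rfl | hvw := eq_or_ne v w
    · exact huv'
    · exact huv'.trans (ih hvw)

theorem exists_cross_of_isCliqueMinor (D : Drawing V E (ℝ × ℝ)) {F : Set E} {B : Fin 5 → Set V}
    (hB : IsCliqueMinor (D.graph F) B) : ∃ e ∈ F, ∃ f ∈ F, D.Cross e f := by
  choose v hv using fun i => Set.nonempty_coe_sort.mp (hB.connected i).nonempty
  obtain ⟨i, j, k, l, hnodup, z, hze, hzf⟩ := exists_inter_nonempty_of_joinedIn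
    (x := fun i => D.pos (v i)) (W := fun i j => D.arcsWithin F (B i ∪ B j)) (fun i j hij => by
      obtain ⟨a, ha, b, hb, hab⟩ := hB.adj i j hij
      exact D.joinedIn_arcsWithin (SimpleGraph.connected_induce_union (hB.connected i).preconnected
        (hB.connected j).preconnected ha hb hab) (.inl (hv i)) (.inr (hv j))
        ((hB.disjoint i j hij).ne_of_mem (hv i) (hv j)))
  obtain ⟨e, ⟨heF, he⟩, hze⟩ := Set.mem_iUnion₂.mp hze
  obtain ⟨f, ⟨hfF, hf⟩, hzf⟩ := Set.mem_iUnion₂.mp hzf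
  have hdisj : Disjoint (B i ∪ B j) (B k ∪ B l) := by
    simp only [List.nodup_cons, List.mem_cons, not_or] at hnodup
    rw [Set.disjoint_union_left, Set.disjoint_union_right, Set.disjoint_union_right]
    refine ⟨⟨?_, ?_⟩, ?_, ?_⟩ <;> apply hB.disjoint <;> tauto
  exact ⟨e, heF, f, hfF, fun a hae haf => hdisj.ne_of_mem (he a hae) (hf a haf) rfl, z, hze, hzf⟩

lemma two_mul_card_le_card_interedges (D : Drawing V E X) {F : Finset E}
    (hF : Set.InjOn D.ends F) {S : Finset V} (hS : ∀ e ∈ F, ∀ v ∈ D.ends e, v ∈ S) :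
    2 * #F ≤ #((D.graph F).interedges S S) := by
  have h := card_mul_le_card_mul (s := F) (t := (D.graph F).interedges S S) (m := 2) (n := 1)
    (fun e p => D.ends e = s(p.1, p.2)) (fun e he => ?_) (fun p _ => ?_)
  · omega
  · obtain ⟨b, hab⟩ := Sym2.mem_iff_exists.mp (D.ends e).out_fst_mem
    set a := (D.ends e).out.1
    have hne : a ≠ b := fun h => D.not_isDiag e (hab ▸ Sym2.mk_isDiag_iff.mpr h)
    have haS : a ∈ S := hS e he a (by simp [hab])
    have hbS : b ∈ S := hS e he b (by simp [hab])
    have hadj : (D.graph F).Adj a b :=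
      (SimpleGraph.fromEdgeSet_adj _).mpr ⟨⟨e, he, hab⟩, hne⟩
    calc 2 = #{(a, b), (b, a)} := (card_pair (by simp [hne])).symm
      _ ≤ _ := card_le_card ?_
    rw [insert_subset_iff, singleton_subset_iff, mem_bipartiteAbove, mem_bipartiteAbove]
    exact ⟨⟨(D.graph F).mk_mem_interedges_iff.mpr ⟨haS, hbS, hadj⟩, hab⟩,
      ⟨(D.graph F).mk_mem_interedges_iff.mpr ⟨hbS, haS, hadj.symm⟩, hab.trans Sym2.eq_swap⟩⟩
  · refine card_le_one.mpr fun e he f hf => ?_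
    rw [mem_bipartiteBelow] at he hf
    exact hF he.1 hf.1 (he.2.trans hf.2.symm)

theorem card_le_of_forall_not_cross (D : Drawing V E (ℝ × ℝ)) {F : Finset E}
    (hF : Set.InjOn D.ends F) {S : Finset V} (hS : ∀ e ∈ F, ∀ v ∈ D.ends e, v ∈ S)
    (hcross : ∀ e ∈ F, ∀ f ∈ F, ¬ D.Cross e f) : #F ≤ 16 * #S := by
  by_contra! hlt
  have hSne : S.Nonempty := by
    obtain ⟨e, he⟩ := card_pos.mp (Nat.zero_lt_of_lt hlt)
    exact ⟨_, hS e he _ (D.ends e).out_fst_mem⟩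
  have hedges := D.two_mul_card_le_card_interedges hF hS
  obtain ⟨B, hB, -⟩ := exists_isCliqueMinor 5 hSne (G := D.graph F) (by omega)
  obtain ⟨e, he, f, hf, hef⟩ := D.exists_cross_of_isCliqueMinor hB
  exact hcross e he f hf hef

theorem card_le_card_crossings_add (D : Drawing V E (ℝ × ℝ)) {F : Finset E}
    (hF : Set.InjOn D.ends F) {S : Finset V} (hS : ∀ e ∈ F, ∀ v ∈ D.ends e, v ∈ S) :
    #F ≤ #(D.crossings F) + 16 * #S := by
  induction F using Finset.strongInduction with
  | H F ih =>
  by_cases hcross : ∀ e ∈ F, ∀ f ∈ F, ¬ D.Cross e f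
  · have := D.card_le_of_forall_not_cross hF hS hcross
    omega
  · push Not at hcross
    obtain ⟨e, he, f, hf, hef⟩ := hcross
    have herase := ih (F.erase e) (erase_ssubset he)
      (hF.mono (coe_subset.mpr (erase_subset e F))) (fun g hg => hS g (mem_of_mem_erase hg))
    have hlt : #(D.crossings (F.erase e)) < #(D.crossings F) := by
      have hsub := product_subset_product (erase_subset e F) (erase_subset e F)
      exact card_lt_card <| (ssubset_iff_of_subset (filter_subset_filter _ hsub)).mpr
        ⟨(e, f), by simp [he, hf, hef], by simp⟩
    have := card_erase_add_one he
    omega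

lemma Cross.symm {D : Drawing V E X} {e f : E} (h : D.Cross e f) : D.Cross f e :=
  ⟨fun a haf hae => h.1 a hae haf, by rw [Set.inter_comm]; exact h.2⟩

lemma Cross.ends_ne {D : Drawing V E X} {e f : E} (h : D.Cross e f) : D.ends e ≠ D.ends f :=
  fun hef => h.1 _ (D.ends e).out_fst_mem (hef ▸ (D.ends e).out_fst_mem)

lemma Cross.card_ends_union [DecidableEq V] {D : Drawing V E X} {e f : E} (h : D.Cross e f) :
    #((D.ends e).toFinset ∪ (D.ends f).toFinset) = 4 := by
  have hdisj : Disjoint (D.ends e).toFinset (D.ends f).toFinset :=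
    disjoint_left.mpr fun a hae haf => h.1 a (Sym2.mem_toFinset.mp hae) (Sym2.mem_toFinset.mp haf)
  rw [card_union_of_disjoint hdisj, Sym2.card_toFinset_of_not_isDiag _ (D.not_isDiag e),
    Sym2.card_toFinset_of_not_isDiag _ (D.not_isDiag f)]

lemma mem_crossings {D : Drawing V E X} {F : Finset E} {q : E × E} :
    q ∈ D.crossings F ↔ (q.1 ∈ F ∧ q.2 ∈ F) ∧ D.Cross q.1 q.2 := by
  rw [crossings, mem_filter, mem_product]

/- Random simple subgraph: draw a label for each pair of vertices and keep the edges carrying the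
label of their pair of ends. -/
theorem card_mul_le_of_injective_label [Finite V] {β : Type*} [Fintype β]
    (D : Drawing V E (ℝ × ℝ)) {lab : E → β} (hlab : Function.Injective fun e => (D.ends e, lab e))
    {F : Finset E} {S : Finset V} (hS : ∀ e ∈ F, ∀ v ∈ D.ends e, v ∈ S) :
    #F * Fintype.card β ≤ #(D.crossings F) + 16 * #S * Fintype.card β ^ 2 := by
  have := Fintype.ofFinite V
  cases isEmpty_or_nonempty β
  · simp
  let sample (ω : Sym2 V → β) : Finset E := {e ∈ F | ω (D.ends e) = lab e}
  have hsample (ω : Sym2 V → β) : #(sample ω) ≤ #(D.crossings (sample ω)) + 16 * #S := by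
    refine D.card_le_card_crossings_add (fun e he f hf hef => hlab (Prod.ext hef ?_))
      fun e he => hS e (mem_filter.mp he).1
    exact (mem_filter.mp he).2.symm.trans ((congrArg ω hef).trans (mem_filter.mp hf).2)
  have hedges : (∑ ω, #(sample ω)) * Fintype.card β ^ 1 =
      #F * Fintype.card β ^ Fintype.card (Sym2 V) := by
    rw [← sum_card_filter_forall_mem_eq_mul F (T := fun e => {D.ends e})
      (fun e _ => card_singleton _) fun e _ => lab e]
    simp only [sample, mem_singleton, forall_eq]
  have hcrossings : (∑ ω, #(D.crossings (sample ω))) * Fintype.card β ^ 2 =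
      #(D.crossings F) * Fintype.card β ^ Fintype.card (Sym2 V) := by
    rw [← sum_card_filter_forall_mem_eq_mul (D.crossings F)
      (T := fun q => {D.ends q.1, D.ends q.2})
      (fun q hq => card_pair (mem_crossings.mp hq).2.ends_ne)
      fun q z => if z = D.ends q.1 then lab q.1 else lab q.2]
    refine congrArg (· * _) (sum_congr rfl fun ω _ => congrArg card ?_)
    ext q
    simp only [sample, mem_crossings, mem_filter, mem_insert, mem_singleton, forall_eq_or_imp,
      forall_eq, if_true]
    have : D.Cross q.1 q.2 → D.ends q.2 ≠ D.ends q.1 := fun h => h.ends_ne.symm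
    grind
  have hsum := sum_le_sum fun ω (_ : ω ∈ univ) => hsample ω
  rw [sum_add_distrib, sum_const, card_univ, smul_eq_mul, Fintype.card_fun] at hsum
  refine Nat.le_of_mul_le_mul_right (c := Fintype.card β ^ Fintype.card (Sym2 V)) ?_ (by positivity)
  calc _ = (∑ ω, #(sample ω)) * Fintype.card β ^ 2 := by
        linear_combination Fintype.card β * hedges.symm
    _ ≤ _ := Nat.mul_le_mul_right _ hsum
    _ = _ := by linear_combination hcrossings

/- Random induced subgraph: keep each vertex with probability `1 / N`. -/
theorem card_mul_sq_mul_le_of_injective_label [Fintype V] [Fintype E] {β : Type*} [Fintype β]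
    (D : Drawing V E (ℝ × ℝ)) {lab : E → β} (hlab : Function.Injective fun e => (D.ends e, lab e))
    {N : ℕ} (hN : 0 < N) :
    Fintype.card E * N ^ 2 * Fintype.card β ≤
      #(D.crossings univ) + 16 * Fintype.card V * N ^ 3 * Fintype.card β ^ 2 := by
  let keptVerts (ω : V → Fin N) : Finset V := {v | ω v = ⟨0, hN⟩}
  let keptEdges (ω : V → Fin N) : Finset E := {e | ∀ v ∈ D.ends e, ω v = ⟨0, hN⟩}
  have hkept (ω : V → Fin N) := D.card_mul_le_of_injective_label hlab (F := keptEdges ω)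
    (S := keptVerts ω) (by simp [keptEdges, keptVerts])
  have hverts : (∑ ω, #(keptVerts ω)) * N ^ 1 = Fintype.card V * N ^ Fintype.card V := by
    have := sum_card_filter_forall_mem_eq_mul (β := Fin N) univ (T := fun v : V => {v})
      (fun v _ => card_singleton _) fun _ _ => ⟨0, hN⟩
    simpa [keptVerts] using this
  have hedges : (∑ ω, #(keptEdges ω)) * N ^ 2 = Fintype.card E * N ^ Fintype.card V := by
    have := sum_card_filter_forall_mem_eq_mul (β := Fin N) univ
      (T := fun e => (D.ends e).toFinset)
      (fun e _ => Sym2.card_toFinset_of_not_isDiag _ (D.not_isDiag e)) fun _ _ => ⟨0, hN⟩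
    simpa [keptEdges] using this
  have hcrossings : (∑ ω, #(D.crossings (keptEdges ω))) * N ^ 4 =
      #(D.crossings univ) * N ^ Fintype.card V := by
    have := sum_card_filter_forall_mem_eq_mul (β := Fin N) (D.crossings univ) (k := 4)
      (T := fun q => (D.ends q.1).toFinset ∪ (D.ends q.2).toFinset)
      (fun q hq => (mem_crossings.mp hq).2.card_ends_union) fun _ _ => ⟨0, hN⟩
    rw [Fintype.card_fin] at this
    rw [← this]
    refine congrArg (· * _) (sum_congr rfl fun ω _ => congrArg card ?_)
    ext q
    simp only [keptEdges, mem_crossings, mem_filter, mem_univ, true_and, mem_union,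
      Sym2.mem_toFinset]
    grind
  have hsum := sum_le_sum fun ω (_ : ω ∈ univ) => hkept ω
  rw [sum_add_distrib, ← sum_mul, ← sum_mul, ← mul_sum] at hsum
  refine Nat.le_of_mul_le_mul_right (c := N ^ Fintype.card V) ?_ (by positivity)
  calc _ = (∑ ω, #(keptEdges ω)) * Fintype.card β * N ^ 4 := by
        linear_combination (N ^ 2 * Fintype.card β) * hedges.symm
    _ ≤ _ := Nat.mul_le_mul_right _ hsum
    _ = _ := by
        linear_combination hcrossings + 16 * N ^ 3 * Fintype.card β ^ 2 * hverts

theorem crossing_lemma [Fintype V] [DecidableEq V] [Fintype E] (D : Drawing V E (ℝ × ℝ)) {m : ℕ}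
    (hm : ∀ z, #{e | D.ends e = z} ≤ m)
    (hE : 32 * m * Fintype.card V ≤ Fintype.card E) :
    Fintype.card E ^ 3 ≤ 2 ^ 13 * m * Fintype.card V ^ 2 * #(D.crossings univ) := by
  obtain hE₀ | ⟨⟨e⟩⟩ := isEmpty_or_nonempty E
  · simp
  obtain ⟨lab, hlab⟩ := exists_injective_prodMk_fin D.ends hm
  have hm₀ : 0 < m := (card_pos.mpr ⟨e, by simp⟩).trans_le (hm (D.ends e))
  have hV₀ : 0 < Fintype.card V := Fintype.card_pos_iff.mpr ⟨(D.ends e).out.1⟩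
  set n := Fintype.card V
  set k := Fintype.card E
  have hmn : 0 < 32 * m * n := by positivity
  set N := k / (32 * m * n)
  have hN : 0 < N := Nat.div_pos hE hmn
  have hle : 32 * m * n * N ≤ k := Nat.mul_div_le k _
  have hlt : k ≤ 64 * m * n * N := by
    have hsucc : k < 32 * m * n * (N + 1) := Nat.lt_mul_div_succ k hmn
    nlinarith
  have hsample := D.card_mul_sq_mul_le_of_injective_label hlab hN
  rw [Fintype.card_fin] at hsample
  have hcross : k * N ^ 2 * m ≤ 2 * #(D.crossings univ) := by
    have := Nat.mul_le_mul_right (N ^ 2 * m) hle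
    linarith
  calc k ^ 3 = k * k ^ 2 := by ring
    _ ≤ k * (64 * m * n * N) ^ 2 := by gcongr
    _ = 2 ^ 12 * m * n ^ 2 * (k * N ^ 2 * m) := by ring
    _ ≤ 2 ^ 12 * m * n ^ 2 * (2 * #(D.crossings univ)) := by gcongr
    _ = _ := by ring

theorem card_le_rpow [Fintype V] [DecidableEq V] [Fintype E] (D : Drawing V E (ℝ × ℝ)) {m : ℕ}
    (hm : ∀ z, #{e | D.ends e = z} ≤ m) :
    (Fintype.card E : ℝ) ≤ 32 * ((m * #(D.crossings univ) : ℝ) ^ ((1 : ℝ) / 3) *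
      (Fintype.card V : ℝ) ^ ((2 : ℝ) / 3) + m * Fintype.card V) := by
  set k := Fintype.card E
  set n := Fintype.card V
  set x := #(D.crossings univ)
  set y := (m * x : ℝ) ^ ((1 : ℝ) / 3) * (n : ℝ) ^ ((2 : ℝ) / 3)
  have hy : 0 ≤ y := by positivity
  have hmn : (0 : ℝ) ≤ m * n := by positivity
  obtain hk | hk := le_total (32 * m * n) k
  · have hy₃ : y ^ 3 = m * x * n ^ 2 := by
      rw [mul_pow, ← Real.rpow_mul_natCast (by positivity), ← Real.rpow_mul_natCast (by positivity)]
      norm_num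
    have hcube : (k : ℝ) ^ 3 ≤ (32 * y) ^ 3 :=
      calc (k : ℝ) ^ 3 ≤ (2 : ℝ) ^ 13 * m * n ^ 2 * x := by exact_mod_cast D.crossing_lemma hm hk
        _ ≤ (32 : ℝ) ^ 3 * m * n ^ 2 * x := by gcongr; norm_num
        _ = (32 * y) ^ 3 := by rw [mul_pow, hy₃]; ring
    linarith [le_of_pow_le_pow_left₀ three_ne_zero (by positivity) hcube]
  · have hk : (k : ℝ) ≤ 32 * m * n := by exact_mod_cast hk
    linarith

end Drawing

section Consecutive

variable {α : Type*} [LinearOrder α]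

/-- The pairs of consecutive elements of a finite set, each listed in increasing order. -/
noncomputable def consec (T : Finset α) : Finset (α × α) :=
  {p ∈ T ×ˢ T | p.1 < p.2 ∧ ∀ r ∈ T, r ∉ Set.Ioo p.1 p.2}

lemma mem_consec {T : Finset α} {p : α × α} :
    p ∈ consec T ↔ p.1 ∈ T ∧ p.2 ∈ T ∧ p.1 < p.2 ∧ ∀ r ∈ T, r ∉ Set.Ioo p.1 p.2 := by
  rw [consec, mem_filter, mem_product, and_assoc]

lemma card_le_card_consec_add_one (T : Finset α) : #T ≤ #(consec T) + 1 := by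
  obtain rfl | hT := T.eq_empty_or_nonempty
  · simp
  have hsub : T.erase (T.max' hT) ⊆ (consec T).image Prod.fst := by
    intro s hs
    obtain ⟨hne, hsT⟩ := mem_erase.mp hs
    have hgt : {t ∈ T | s < t}.Nonempty :=
      ⟨T.max' hT, mem_filter.mpr ⟨T.max'_mem hT, (T.le_max' s hsT).lt_of_ne hne⟩⟩
    obtain ⟨hnextT, hnext⟩ := mem_filter.mp (min'_mem _ hgt)
    refine mem_image.mpr ⟨(s, min' _ hgt), mem_consec.mpr ⟨hsT, hnextT, hnext, ?_⟩, rfl⟩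
    exact fun r hr hrs => (min'_le _ r (mem_filter.mpr ⟨hr, hrs.1⟩)).not_gt hrs.2
  calc #T = #(T.erase (T.max' hT)) + 1 := (card_erase_add_one (T.max'_mem hT)).symm
    _ ≤ #(consec T) + 1 := by gcongr; exact (card_le_card hsub).trans card_image_le

lemma eq_of_mem_Ioo_of_mem_consec {T : Finset α} {p q : α × α} (hp : p ∈ consec T)
    (hq : q ∈ consec T) {r : α} (hrp : r ∈ Set.Ioo p.1 p.2) (hrq : r ∈ Set.Ioo q.1 q.2) :
    p = q := by
  have hle {p q : α × α} (hp : p ∈ consec T) (hq : q ∈ consec T) (hrp : r ∈ Set.Ioo p.1 p.2)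
      (hrq : r ∈ Set.Ioo q.1 q.2) : p.1 ≤ q.1 ∧ q.2 ≤ p.2 := by
    obtain ⟨hp₁, hp₂, -, -⟩ := mem_consec.mp hp
    obtain ⟨-, -, -, hgap⟩ := mem_consec.mp hq
    exact ⟨not_lt.mp fun h => hgap _ hp₁ ⟨h, hrp.1.trans hrq.2⟩,
      not_lt.mp fun h => hgap _ hp₂ ⟨hrq.1.trans hrp.2, h⟩⟩
  have hpq := hle hp hq hrp hrq
  have hqp := hle hq hp hrq hrp
  exact Prod.ext (hpq.1.antisymm hqp.1) (hqp.2.antisymm hpq.2)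

end Consecutive

section Curves

variable {ι X : Type*}

/-- The parameters in `[0, 1]` at which the curve `γ` visits `P`, one for each visited point. -/
noncomputable def marks (γ : ℝ → X) (P : Finset X) : Finset ℝ :=
  {p ∈ P | p ∈ γ '' Set.Icc 0 1}.image (Function.invFunOn γ (Set.Icc 0 1))

lemma card_marks (γ : ℝ → X) (P : Finset X) : #(marks γ P) = #{p ∈ P | p ∈ γ '' Set.Icc 0 1} :=
  card_image_of_injOn <| (Function.invFunOn_injOn_image γ _).mono fun _ hp => (mem_filter.mp hp).2

lemma mem_marks {γ : ℝ → X} (hγ : Set.InjOn γ (Set.Icc 0 1)) {P : Finset X} {t : ℝ} :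
    t ∈ marks γ P ↔ t ∈ Set.Icc 0 1 ∧ γ t ∈ P := by
  simp only [marks, mem_image, mem_filter]
  constructor
  · rintro ⟨p, ⟨hpP, hp⟩, rfl⟩
    exact ⟨Function.invFunOn_mem hp, (Function.invFunOn_eq hp).symm ▸ hpP⟩
  · exact fun ⟨ht, htP⟩ =>
      ⟨γ t, ⟨htP, t, ht, rfl⟩, hγ.leftInvOn_invFunOn ht⟩

variable [Fintype ι]

/-- The parameter intervals into which `P` cuts the curves `γ i`: the element `⟨i, s, t⟩` stands for
the arc of `γ i` from `γ i s` to `γ i t`. -/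
noncomputable def arcs (γ : ι → ℝ → X) (P : Finset X) : Finset (Σ _ : ι, ℝ × ℝ) :=
  univ.sigma fun i => consec (marks (γ i) P)

lemma sum_card_le_card_arcs_add (γ : ι → ℝ → X) (P : Finset X) :
    ∑ i, #{p ∈ P | p ∈ γ i '' Set.Icc 0 1} ≤ #(arcs γ P) + Fintype.card ι := by
  calc ∑ i, #{p ∈ P | p ∈ γ i '' Set.Icc 0 1}
      ≤ ∑ i, (#(consec (marks (γ i) P)) + 1) :=
        sum_le_sum fun i _ => card_marks (γ i) P ▸ card_le_card_consec_add_one _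
    _ = #(arcs γ P) + Fintype.card ι := by simp [arcs, sum_add_distrib]

variable {γ : ι → ℝ → X} {P : Finset X}

lemma mem_consec_of_mem_arcs {e : Σ _ : ι, ℝ × ℝ} (he : e ∈ arcs γ P) :
    e.2 ∈ consec (marks (γ e.1) P) :=
  (mem_sigma.mp he).2

lemma fst_lt_snd_of_mem_arcs {e : Σ _ : ι, ℝ × ℝ} (he : e ∈ arcs γ P) : e.2.1 < e.2.2 :=
  (mem_consec.mp (mem_consec_of_mem_arcs he)).2.2.1

section Simple

variable (hsimple : ∀ i, Set.InjOn (γ i) (Set.Icc 0 1))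
include hsimple

lemma fst_mem_of_mem_arcs {e : Σ _ : ι, ℝ × ℝ} (he : e ∈ arcs γ P) :
    e.2.1 ∈ Set.Icc 0 1 ∧ γ e.1 e.2.1 ∈ P :=
  (mem_marks (hsimple e.1)).mp (mem_consec.mp (mem_consec_of_mem_arcs he)).1

lemma snd_mem_of_mem_arcs {e : Σ _ : ι, ℝ × ℝ} (he : e ∈ arcs γ P) :
    e.2.2 ∈ Set.Icc 0 1 ∧ γ e.1 e.2.2 ∈ P :=
  (mem_marks (hsimple e.1)).mp (mem_consec.mp (mem_consec_of_mem_arcs he)).2.1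

lemma Icc_subset_of_mem_arcs {e : Σ _ : ι, ℝ × ℝ} (he : e ∈ arcs γ P) :
    Set.Icc e.2.1 e.2.2 ⊆ Set.Icc 0 1 :=
  Set.Icc_subset_Icc (fst_mem_of_mem_arcs hsimple he).1.1 (snd_mem_of_mem_arcs hsimple he).1.2

lemma notMem_of_mem_Ioo_of_mem_arcs {e : Σ _ : ι, ℝ × ℝ} (he : e ∈ arcs γ P) {r : ℝ}
    (hr : r ∈ Set.Ioo e.2.1 e.2.2) : γ e.1 r ∉ P := fun hrP =>
  (mem_consec.mp (mem_consec_of_mem_arcs he)).2.2.2 r ((mem_marks (hsimple e.1)).mpr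
    ⟨Icc_subset_of_mem_arcs hsimple he (Set.Ioo_subset_Icc_self hr), hrP⟩) hr

lemma eq_of_mem_image_Ioo_of_mem_arcs {e f : Σ _ : ι, ℝ × ℝ} (he : e ∈ arcs γ P)
    (hf : f ∈ arcs γ P) (hef : e.1 = f.1) {x : X} (hxe : x ∈ γ e.1 '' Set.Ioo e.2.1 e.2.2)
    (hxf : x ∈ γ f.1 '' Set.Ioo f.2.1 f.2.2) : e = f := by
  obtain ⟨i, p⟩ := e
  obtain ⟨j, q⟩ := f
  obtain rfl : i = j := hef
  obtain ⟨r, hr, rfl⟩ := hxe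
  obtain ⟨r', hr', hrr'⟩ := hxf
  obtain rfl : r' = r := hsimple i
    (Icc_subset_of_mem_arcs hsimple hf (Set.Ioo_subset_Icc_self hr'))
    (Icc_subset_of_mem_arcs hsimple he (Set.Ioo_subset_Icc_self hr)) hrr'
  exact congrArg (Sigma.mk i) <|
    eq_of_mem_Ioo_of_mem_consec (mem_consec_of_mem_arcs he) (mem_consec_of_mem_arcs hf) hr hr'

end Simple

variable [TopologicalSpace X]

/-- Székely's multigraph on the points of `P`: its edges are the arcs of the curves between
consecutive points of `P`. -/
noncomputable def arcDrawing (hcont : ∀ i, ContinuousOn (γ i) (Set.Icc 0 1))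
    (hsimple : ∀ i, Set.InjOn (γ i) (Set.Icc 0 1)) (P : Finset X) : Drawing P (arcs γ P) X where
  pos := Subtype.val
  ends e := s(⟨_, (fst_mem_of_mem_arcs hsimple e.2).2⟩, ⟨_, (snd_mem_of_mem_arcs hsimple e.2).2⟩)
  arc e := γ e.1.1 '' Set.Icc e.1.2.1 e.1.2.2
  not_isDiag e h := (fst_lt_snd_of_mem_arcs e.2).ne <|
    hsimple _ (fst_mem_of_mem_arcs hsimple e.2).1 (snd_mem_of_mem_arcs hsimple e.2).1
      (congrArg Subtype.val (Sym2.mk_isDiag_iff.mp h))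
  joinedIn e a ha b hb := by
    have hle := (fst_lt_snd_of_mem_arcs e.2).le
    have hmem {c : P} (hc : c = ⟨_, (fst_mem_of_mem_arcs hsimple e.2).2⟩ ∨
        c = ⟨_, (snd_mem_of_mem_arcs hsimple e.2).2⟩) :
        (c : X) ∈ γ e.1.1 '' Set.Icc e.1.2.1 e.1.2.2 := by
      rcases hc with rfl | rfl
      exacts [⟨_, Set.left_mem_Icc.mpr hle, rfl⟩, ⟨_, Set.right_mem_Icc.mpr hle, rfl⟩]
    have hpath : IsPathConnected (γ e.1.1 '' Set.Icc e.1.2.1 e.1.2.2) :=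
      ((convex_Icc _ _).isPathConnected ⟨_, Set.left_mem_Icc.mpr hle⟩).image'
        ((hcont e.1.1).mono (Icc_subset_of_mem_arcs hsimple e.2))
    exact hpath.joinedIn _ (hmem (Sym2.mem_iff.mp ha)) _ (hmem (Sym2.mem_iff.mp hb))

namespace arcDrawing

variable {hcont : ∀ i, ContinuousOn (γ i) (Set.Icc 0 1)}
  {hsimple : ∀ i, Set.InjOn (γ i) (Set.Icc 0 1)}

lemma mem_image_of_mem_ends {e : arcs γ P} {a : P} (ha : a ∈ (arcDrawing hcont hsimple P).ends e) :
    (a : X) ∈ γ e.1.1 '' Set.Icc 0 1 := by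
  rcases (Sym2.mem_iff.mp ha : a = _ ∨ a = _) with rfl | rfl
  exacts [⟨_, (fst_mem_of_mem_arcs hsimple e.2).1, rfl⟩,
    ⟨_, (snd_mem_of_mem_arcs hsimple e.2).1, rfl⟩]

lemma eq_of_ends_eq {e f : arcs γ P} (hcurve : e.1.1 = f.1.1)
    (hends : (arcDrawing hcont hsimple P).ends e = (arcDrawing hcont hsimple P).ends f) :
    e = f := by
  obtain ⟨⟨i, p⟩, he⟩ := e
  obtain ⟨⟨j, q⟩, hf⟩ := f
  obtain rfl : i = j := hcurve
  have heq {s t : ℝ} (hs : s ∈ Set.Icc 0 1 ∧ γ i s ∈ P) (ht : t ∈ Set.Icc 0 1 ∧ γ i t ∈ P)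
      (h : (⟨γ i s, hs.2⟩ : P) = ⟨γ i t, ht.2⟩) : s = t :=
    hsimple i hs.1 ht.1 (congrArg Subtype.val h)
  have hp₁ := fst_mem_of_mem_arcs hsimple he
  have hp₂ := snd_mem_of_mem_arcs hsimple he
  have hq₁ := fst_mem_of_mem_arcs hsimple hf
  have hq₂ := snd_mem_of_mem_arcs hsimple hf
  rcases Sym2.eq_iff.mp hends with ⟨h₁, h₂⟩ | ⟨h₁, h₂⟩
  · exact Subtype.ext (congrArg (Sigma.mk i) (Prod.ext (heq hp₁ hq₁ h₁) (heq hp₂ hq₂ h₂)))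
  · have hlt : p.1 < p.2 := fst_lt_snd_of_mem_arcs he
    have hlt' : q.1 < q.2 := fst_lt_snd_of_mem_arcs hf
    rw [heq hp₁ hq₂ h₁, heq hp₂ hq₁ h₂] at hlt
    exact absurd hlt hlt'.not_gt

lemma card_filter_ends_eq_le [DecidableEq P] {m : ℕ}
    (hm : ∀ p ∈ P, ∀ q ∈ P, p ≠ q → #{i | p ∈ γ i '' Set.Icc 0 1 ∧ q ∈ γ i '' Set.Icc 0 1} ≤ m)
    (z : Sym2 P) : #{e | (arcDrawing hcont hsimple P).ends e = z} ≤ m := by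
  induction z with | _ p q
  obtain hempty | ⟨e, he⟩ :=
    eq_empty_or_nonempty {e | (arcDrawing hcont hsimple P).ends e = s(p, q)}
  · exact hempty ▸ Nat.zero_le m
  have hpq : p ≠ q := fun h => (arcDrawing hcont hsimple P).not_isDiag e <| by
    rw [(mem_filter.mp he).2, h, Sym2.mk_isDiag_iff]
  refine le_trans ?_ (hm p p.2 q q.2 (Subtype.coe_injective.ne hpq))
  refine card_le_card_of_injOn (fun e => e.1.1) (fun e he => ?_) fun e he f hf hcurve => ?_
  · have hends := (mem_filter.mp he).2
    exact mem_filter.mpr ⟨mem_univ _, mem_image_of_mem_ends (hends ▸ Sym2.mem_mk_left p q),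
      mem_image_of_mem_ends (hends ▸ Sym2.mem_mk_right p q)⟩
  · exact eq_of_ends_eq hcurve ((mem_filter.mp he).2.trans (mem_filter.mp hf).2.symm)

lemma mem_image_Ioo_of_mem_arc {e : arcs γ P} {x : X}
    (hx : x ∈ (arcDrawing hcont hsimple P).arc e)
    (hne : ∀ a ∈ (arcDrawing hcont hsimple P).ends e, (a : X) ≠ x) :
    x ∈ γ e.1.1 '' Set.Ioo e.1.2.1 e.1.2.2 := by
  obtain ⟨r, hr, rfl⟩ := hx
  refine ⟨r, ⟨hr.1.lt_of_ne ?_, hr.2.lt_of_ne ?_⟩, rfl⟩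
  · rintro rfl
    exact hne _ (Sym2.mem_mk_left _ _) rfl
  · rintro rfl
    exact hne _ (Sym2.mem_mk_right _ _) rfl

lemma mem_ends_of_mem_arc {e : arcs γ P} {a : P}
    (ha : (a : X) ∈ (arcDrawing hcont hsimple P).arc e) :
    a ∈ (arcDrawing hcont hsimple P).ends e := by
  by_contra hends
  obtain ⟨r, hr, hra⟩ := mem_image_Ioo_of_mem_arc ha
    fun b hb hba => hends (Subtype.ext hba ▸ hb)
  exact notMem_of_mem_Ioo_of_mem_arcs hsimple e.2 hr (hra ▸ a.2)

lemma mem_image_Ioo_of_cross {e f : arcs γ P} (hef : (arcDrawing hcont hsimple P).Cross e f)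
    {x : X} (hxe : x ∈ (arcDrawing hcont hsimple P).arc e)
    (hxf : x ∈ (arcDrawing hcont hsimple P).arc f) :
    x ∈ γ e.1.1 '' Set.Ioo e.1.2.1 e.1.2.2 :=
  mem_image_Ioo_of_mem_arc hxe fun a ha hax => hef.1 a ha (mem_ends_of_mem_arc (hax ▸ hxf))

lemma eq_of_cross {e f e' f' : arcs γ P} (hef : (arcDrawing hcont hsimple P).Cross e f)
    (hef' : (arcDrawing hcont hsimple P).Cross e' f') (hcurve : e.1.1 = e'.1.1) {x : X}
    (hxe : x ∈ (arcDrawing hcont hsimple P).arc e)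
    (hxf : x ∈ (arcDrawing hcont hsimple P).arc f)
    (hxe' : x ∈ (arcDrawing hcont hsimple P).arc e')
    (hxf' : x ∈ (arcDrawing hcont hsimple P).arc f') : e = e' :=
  Subtype.ext <| eq_of_mem_image_Ioo_of_mem_arcs hsimple e.2 e'.2 hcurve
    (mem_image_Ioo_of_cross hef hxe hxf) (mem_image_Ioo_of_cross hef' hxe' hxf')

lemma curve_ne_of_cross {e f : arcs γ P} (hef : (arcDrawing hcont hsimple P).Cross e f) :
    e.1.1 ≠ f.1.1 := fun hcurve => by
  obtain ⟨x, hxe, hxf⟩ := hef.2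
  exact hef.ends_ne (congrArg _ (eq_of_cross hef hef.symm hcurve hxe hxf hxf hxe))

lemma card_filter_crossings_le {i j : ι}
    (hfin : (γ i '' Set.Icc 0 1 ∩ γ j '' Set.Icc 0 1).Finite) :
    #{q ∈ (arcDrawing hcont hsimple P).crossings univ | (q.1.1.1, q.2.1.1) = (i, j)} ≤
      (γ i '' Set.Icc 0 1 ∩ γ j '' Set.Icc 0 1).ncard := by
  set D := arcDrawing hcont hsimple P
  rw [Set.ncard_eq_toFinset_card _ hfin]
  refine card_le_card_of_forall_subsingleton (fun q x => x ∈ D.arc q.1 ∩ D.arc q.2)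
    (fun q hq => ?_) fun x _ q hq q' hq' => ?_
  · obtain ⟨hcross, hij⟩ := mem_filter.mp hq
    obtain ⟨rfl, rfl⟩ := Prod.mk.inj hij
    obtain ⟨x, hx₁, hx₂⟩ := (Drawing.mem_crossings.mp hcross).2.2
    exact ⟨x, hfin.mem_toFinset.mpr
      ⟨Set.image_mono (Icc_subset_of_mem_arcs hsimple q.1.2) hx₁,
        Set.image_mono (Icc_subset_of_mem_arcs hsimple q.2.2) hx₂⟩, hx₁, hx₂⟩
  · obtain ⟨hq, hx₁, hx₂⟩ := hq
    obtain ⟨hq', hx₁', hx₂'⟩ := hq'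
    obtain ⟨hcross, hij⟩ := mem_filter.mp hq
    obtain ⟨hcross', hij'⟩ := mem_filter.mp hq'
    obtain ⟨h₁, h₂⟩ := Prod.mk.inj (hij.trans hij'.symm)
    have hc := (Drawing.mem_crossings.mp hcross).2
    have hc' := (Drawing.mem_crossings.mp hcross').2
    exact Prod.ext (eq_of_cross hc hc' h₁ hx₁ hx₂ hx₁' hx₂')
      (eq_of_cross hc.symm hc'.symm h₂ hx₂ hx₁ hx₂' hx₁')

theorem card_crossings_le
    (hfin : ∀ i j, i ≠ j → (γ i '' Set.Icc 0 1 ∩ γ j '' Set.Icc 0 1).Finite) :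
    #((arcDrawing hcont hsimple P).crossings univ) ≤
      ∑ q ∈ univ.offDiag, (γ q.1 '' Set.Icc 0 1 ∩ γ q.2 '' Set.Icc 0 1).ncard := by
  rw [card_eq_sum_card_fiberwise (f := fun q => (q.1.1.1, q.2.1.1)) (t := univ.offDiag)
    fun q hq => by simpa using curve_ne_of_cross (Drawing.mem_crossings.mp hq).2]
  exact sum_le_sum fun ⟨i, j⟩ hij => card_filter_crossings_le (hfin i j (mem_offDiag.mp hij).2.2)

end arcDrawing

end Curves

section Averages

lemma sum_offDiag_eq_two_mul_sum_lt {ι R : Type*} [LinearOrder ι] [NonAssocSemiring R]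
    (s : Finset ι) {f : ι → ι → R} (hf : ∀ i j, f i j = f j i) :
    ∑ q ∈ s.offDiag, f q.1 q.2 = 2 * ∑ q ∈ s ×ˢ s with q.1 < q.2, f q.1 q.2 := by
  have hlt : {q ∈ s.offDiag | q.1 < q.2} = {q ∈ s ×ˢ s | q.1 < q.2} := by grind
  have hgt : ∑ q ∈ s.offDiag with ¬ q.1 < q.2, f q.1 q.2 =
      ∑ q ∈ s ×ˢ s with q.1 < q.2, f q.1 q.2 :=
    sum_nbij' Prod.swap Prod.swap (by grind) (by grind) (by simp) (by simp) fun q _ => hf _ _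
  rw [← sum_filter_add_sum_filter_not s.offDiag (fun q => q.1 < q.2), hgt, hlt, two_mul]

lemma sum_offDiag_le_sq_mul {n : ℕ} {f : Fin n → Fin n → ℕ} (hf : ∀ i j, f i j = f j i) :
    ((∑ q ∈ univ.offDiag, f q.1 q.2 : ℕ) : ℝ) ≤
      n ^ 2 * ((n.choose 2 : ℝ)⁻¹ * ∑ q ∈ univ ×ˢ univ with q.1 < q.2, (f q.1 q.2 : ℝ)) := by
  obtain hn | hn := lt_or_ge n 2
  · have : Subsingleton (Fin n) := Fin.subsingleton_iff_le_one.mpr (Nat.le_of_lt_succ hn)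
    have hempty : (univ : Finset (Fin n)).offDiag = ∅ := by
      ext q
      simp [Subsingleton.elim q.1 q.2]
    rw [hempty, sum_empty, Nat.cast_zero]
    positivity
  · have hchoose : (0 : ℝ) < n.choose 2 := by exact_mod_cast Nat.choose_pos hn
    have hsq : 2 * (n.choose 2 : ℝ) ≤ n ^ 2 := by
      have := Nat.choose_le_pow_div (α := ℝ) 2 n
      norm_num at this
      linarith
    rw [sum_offDiag_eq_two_mul_sum_lt univ hf, ← mul_assoc, ← div_eq_mul_inv, Nat.cast_mul,
      Nat.cast_sum]
    gcongr
    rwa [le_div_iff₀ hchoose, Nat.cast_two]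

end Averages

theorem sum_card_incidences_le {ι : Type*} [Fintype ι] {γ : ι → ℝ → ℝ × ℝ}
    (hcont : ∀ i, ContinuousOn (γ i) (Set.Icc 0 1))
    (hsimple : ∀ i, Set.InjOn (γ i) (Set.Icc 0 1)) {P : Finset (ℝ × ℝ)} {m : ℕ}
    (hm : ∀ p ∈ P, ∀ q ∈ P, p ≠ q → #{i | p ∈ γ i '' Set.Icc 0 1 ∧ q ∈ γ i '' Set.Icc 0 1} ≤ m)
    (hfin : ∀ i j, i ≠ j → (γ i '' Set.Icc 0 1 ∩ γ j '' Set.Icc 0 1).Finite) :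
    ((∑ i, #{p ∈ P | p ∈ γ i '' Set.Icc 0 1} : ℕ) : ℝ) ≤
      32 * ((m * (∑ q ∈ univ.offDiag, (γ q.1 '' Set.Icc 0 1 ∩ γ q.2 '' Set.Icc 0 1).ncard : ℕ) : ℝ)
        ^ ((1 : ℝ) / 3) * (#P : ℝ) ^ ((2 : ℝ) / 3) + m * #P) + Fintype.card ι := by
  have hedges := (arcDrawing hcont hsimple P).card_le_rpow (arcDrawing.card_filter_ends_eq_le hm)
  rw [Fintype.card_coe, Fintype.card_coe] at hedges
  calc ((∑ i, #{p ∈ P | p ∈ γ i '' Set.Icc 0 1} : ℕ) : ℝ)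
      ≤ #(arcs γ P) + Fintype.card ι := by exact_mod_cast sum_card_le_card_arcs_add γ P
    _ ≤ _ := by
      grw [hedges]
      gcongr
      exact arcDrawing.card_crossings_le hfin

/-- Székely-type incidence bound for simple curves, with only the *average*
pairwise intersection multiplicity `m₂` controlled: the number of point–curve
incidences satisfies `I ≪ (m₁ m₂)^{1/3} (pℓ)^{2/3} + ℓ + m₁ p`. -/
theorem stmt11 :
    ∃ K : ℝ, 0 < K ∧
      ∀ (ℓ : ℕ) (γ : Fin ℓ → ℝ → ℝ × ℝ)
        (_hcont : ∀ i, ContinuousOn (γ i) (Set.Icc 0 1))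
        (_hsimple : ∀ i, Set.InjOn (γ i) (Set.Icc 0 1))
        (P : Finset (ℝ × ℝ)) (m₁ m₂ : ℝ),
        (0 < m₁) →
        (∀ p ∈ P, ∀ q ∈ P, p ≠ q →
          ((Finset.univ.filter (fun i : Fin ℓ =>
            p ∈ γ i '' Set.Icc 0 1 ∧ q ∈ γ i '' Set.Icc 0 1)).card : ℝ) ≤ m₁) →
        (∀ i j : Fin ℓ, i ≠ j →
          (γ i '' Set.Icc 0 1 ∩ γ j '' Set.Icc 0 1).Finite) →
        (m₂ = ((ℓ.choose 2 : ℝ))⁻¹ *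
          ∑ q ∈ (Finset.univ ×ˢ Finset.univ).filter
              (fun q : Fin ℓ × Fin ℓ => q.1 < q.2),
            ((γ q.1 '' Set.Icc 0 1 ∩ γ q.2 '' Set.Icc 0 1).ncard : ℝ)) →
        ((∑ i : Fin ℓ, (P.filter (fun p => p ∈ γ i '' Set.Icc 0 1)).card : ℕ) : ℝ)
          ≤ K * ((m₁ * m₂) ^ ((1:ℝ)/3) * ((P.card : ℝ) * ℓ) ^ ((2:ℝ)/3)
              + ℓ + m₁ * P.card) := by
  refine ⟨32, by norm_num, fun ℓ γ hcont hsimple P m₁ m₂ hm₁ hmult hfin hm₂ => ?_⟩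
  have hm₂_nonneg : 0 ≤ m₂ := hm₂ ▸ by positivity
  have hinc := sum_card_incidences_le hcont hsimple (m := ⌊m₁⌋₊)
    (fun p hp q hq hpq => Nat.le_floor (hmult p hp q hq hpq)) hfin
  have hinter := sum_offDiag_le_sq_mul fun i j => congrArg Set.ncard
    (Set.inter_comm (γ i '' Set.Icc 0 1) (γ j '' Set.Icc 0 1))
  rw [← hm₂] at hinter
  grw [hinter, Nat.floor_le hm₁.le, Fintype.card_fin] at hinc
  have hrpow : (m₁ * (ℓ ^ 2 * m₂)) ^ ((1 : ℝ) / 3) * (#P : ℝ) ^ ((2 : ℝ) / 3) =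
      (m₁ * m₂) ^ ((1 : ℝ) / 3) * (#P * ℓ) ^ ((2 : ℝ) / 3) := by
    rw [mul_left_comm, Real.mul_rpow (by positivity) (by positivity),
      Real.mul_rpow (x := (#P : ℝ)) (by positivity) (by positivity),
      ← Real.rpow_natCast_mul (by positivity)]
    ring_nf
  rw [hrpow] at hinc
  linarith [ℓ.cast_nonneg (α := ℝ)]
end

section
/- Let 0 < ε ≤ 1 and let A be a set of n positive reals pairwise at least 1 apart, with all elements in a single dyadic interval [x, 2x) where x ≥ n. With perturbed products P defined as in the main theorem (|δ_{a,b}| < n^{1−ε}/a, |δ'_{a,b}| < n^{1−ε}/b), one has |P|·|A+A| ≫ n^{2−ε(5·(1/9)/2 − 1/2)} / (log n)^{2/3}, i.e., |P|·|A+A| ≫ n^{2 + ε·13/36}/(log n)^{2/3}... more simply: |P| · |A+A| ≫ n^{2 + ε/4} up to logarithmic factors, when all of A lies in one dyadic interval. -/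
open Finset Pointwise

/-!
Solymosi's consecutive-pairs argument takes the place of the incidence theorem. Enumerate `A` as
`e₀ < e₁ < ⋯`. For fixed `a, b ∈ A` the sequence `b + eᵢ` increases in `A + A`, and, as the
perturbations are too small to disturb the order, the perturbed products of `a` and `eᵢ` increase
in `P`. Hence for at least half of the indices `i` few elements of `A + A` lie between `b + eᵢ` and
`b + eᵢ₊₁`, and few elements of `P` between the two products. A pair of elements of `A + A` and a
pair of elements of `P` determine `eᵢ₊₁ - eᵢ`, hence `a` up to `O(n ^ (1 - ε))`, and `a` determines
`i` and `b`. Counting the triples `(a, b, i)` in two ways gives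
`n ^ 5 ≪ n ^ (1 - ε) * |A + A| ^ 2 * |P| ^ 2`, which has no logarithmic loss.
-/

section ClosePairs

variable {α β : Type*} [LinearOrder α] [LinearOrder β] {m : ℕ}

/-- The pairs `u < v` of elements of `S` such that at most `k` elements of `S` lie in `(u, v]`:
for `k = 1` the pairs of consecutive elements, for larger `k` their relaxation in the counting
argument. -/
def closePairs (S : Finset α) (k : ℕ) : Finset (α × α) :=
  {q ∈ S ×ˢ S | q.1 < q.2 ∧ #{s ∈ S | q.1 < s ∧ s ≤ q.2} ≤ k}

lemma mem_closePairs {S : Finset α} {k : ℕ} {u v : α} :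
    (u, v) ∈ closePairs S k ↔
      (u ∈ S ∧ v ∈ S) ∧ u < v ∧ #{s ∈ S | u < s ∧ s ≤ v} ≤ k := by
  simp only [closePairs, mem_filter, mem_product]

lemma strictMonoOn_card_filter_lt_le (S : Finset α) (u : α) :
    StrictMonoOn (fun v ↦ #{s ∈ S | u < s ∧ s ≤ v}) {v | v ∈ S ∧ u < v} := by
  intro v _ w hw hvw
  refine card_lt_card ((ssubset_iff_of_subset ?_).2 ⟨w, ?_, ?_⟩)
  · exact monotone_filter_right S fun s _ hs ↦ ⟨hs.1, hs.2.trans hvw.le⟩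
  · exact mem_filter.2 ⟨hw.1, hw.2, le_rfl⟩
  · exact fun hwv ↦ hvw.not_ge (mem_filter.1 hwv).2.2

lemma card_closePairs_le (S : Finset α) (k : ℕ) : #(closePairs S k) ≤ k * #S := by
  refine card_le_mul_card_image_of_maps_to (f := Prod.fst)
    (fun q hq ↦ (mem_closePairs.1 hq).1.1) k fun u _ ↦ ?_
  refine (card_le_card_of_injOn (t := Icc 1 k) (fun q ↦ #{s ∈ S | u < s ∧ s ≤ q.2}) ?_ ?_).trans_eq
    (by rw [Nat.card_Icc, Nat.add_sub_cancel])
  · rintro ⟨_, v⟩ hq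
    obtain ⟨hclose, rfl⟩ := mem_filter.1 (mem_coe.1 hq)
    obtain ⟨⟨_, hv⟩, huv, hk⟩ := mem_closePairs.1 hclose
    exact mem_Icc.2 ⟨card_pos.2 ⟨v, mem_filter.2 ⟨hv, huv, le_rfl⟩⟩, hk⟩
  · rintro ⟨_, v⟩ hq ⟨_, w⟩ hq' hvw
    obtain ⟨hclose, rfl⟩ := mem_filter.1 (mem_coe.1 hq)
    obtain ⟨hclose', rfl⟩ := mem_filter.1 (mem_coe.1 hq')
    obtain ⟨⟨_, hv⟩, huv, _⟩ := mem_closePairs.1 hclose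
    obtain ⟨⟨_, hw⟩, huw, _⟩ := mem_closePairs.1 hclose'
    exact Prod.ext rfl
      ((strictMonoOn_card_filter_lt_le S _).injOn ⟨hv, huv⟩ ⟨hw, huw⟩ hvw)

lemma mul_card_closePairs_le (S : Finset α) (r m : ℕ) :
    m * #(closePairs S (r * #S / m)) ≤ r * #S ^ 2 :=
  calc m * #(closePairs S (r * #S / m)) ≤ m * (r * #S / m * #S) :=
        Nat.mul_le_mul_left m (card_closePairs_le S _)
    _ = m * (r * #S / m) * #S := (mul_assoc ..).symm
    _ ≤ r * #S * #S := Nat.mul_le_mul_right _ (Nat.mul_div_le _ m)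
    _ = r * #S ^ 2 := by ring

lemma sum_card_filter_lt_le_le_card (S : Finset α) {f : Fin (m + 1) → α} (hf : Monotone f) :
    ∑ i : Fin m, #{s ∈ S | f i.castSucc < s ∧ s ≤ f i.succ} ≤ #S := by
  rw [← card_biUnion]
  · exact card_le_card (biUnion_subset.2 fun i _ ↦ filter_subset _ S)
  · have disjoint_of_lt : ∀ i j : Fin m, i < j →
        Disjoint {s ∈ S | f i.castSucc < s ∧ s ≤ f i.succ}
          {s ∈ S | f j.castSucc < s ∧ s ≤ f j.succ} := fun i j hij ↦
      disjoint_filter.2 fun s _ hi hj ↦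
        (hi.2.trans (hf (Fin.succ_le_castSucc_iff.2 hij))).not_gt hj.1
    intro i _ j _ hij
    exact hij.lt_or_gt.elim (disjoint_of_lt i j) fun hji ↦ (disjoint_of_lt j i hji).symm

lemma succ_mul_card_notMem_closePairs_le {S : Finset α} {f : Fin (m + 1) → α}
    (hf : StrictMono f) (hfS : ∀ i, f i ∈ S) (k : ℕ) :
    (k + 1) * #{i : Fin m | (f i.castSucc, f i.succ) ∉ closePairs S k} ≤ #S := by
  refine le_trans ?_ (sum_card_filter_lt_le_le_card S hf.monotone)
  rw [mul_comm, ← smul_eq_mul]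
  refine (card_nsmul_le_sum _ (fun i ↦ #{s ∈ S | f i.castSucc < s ∧ s ≤ f i.succ}) _ ?_).trans
    (sum_le_sum_of_subset (subset_univ _))
  intro i hi
  by_contra! hlt
  exact (mem_filter.1 hi).2 (mem_closePairs.2
    ⟨⟨hfS _, hfS _⟩, hf i.castSucc_lt_succ, Nat.lt_succ_iff.1 hlt⟩)

lemma mul_card_notMem_closePairs_le {S : Finset α} {f : Fin (m + 1) → α}
    (hf : StrictMono f) (hfS : ∀ i, f i ∈ S) (r : ℕ) :
    r * #{i : Fin m | (f i.castSucc, f i.succ) ∉ closePairs S (r * #S / m)} ≤ m := by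
  obtain rfl | hm := m.eq_zero_or_pos
  · simp only [univ_eq_empty, filter_empty, card_empty, mul_zero, le_refl]
  set k := r * #S / m
  set bad := #{i : Fin m | (f i.castSucc, f i.succ) ∉ closePairs S k}
  refine le_of_mul_le_mul_left (a := k + 1) ?_ k.succ_pos
  calc (k + 1) * (r * bad) = r * ((k + 1) * bad) := mul_left_comm ..
    _ ≤ r * #S := Nat.mul_le_mul_left r (succ_mul_card_notMem_closePairs_le hf hfS k)
    _ ≤ m * (k + 1) := (Nat.lt_mul_div_succ _ hm).le
    _ = (k + 1) * m := mul_comm ..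

lemma le_two_mul_card_mem_closePairs {S : Finset α} {S' : Finset β} {f : Fin (m + 1) → α}
    {g : Fin (m + 1) → β} (hf : StrictMono f) (hfS : ∀ i, f i ∈ S) (hg : StrictMono g)
    (hgS' : ∀ i, g i ∈ S') :
    m ≤ 2 * #{i : Fin m | (f i.castSucc, f i.succ) ∈ closePairs S (4 * #S / m) ∧
      (g i.castSucc, g i.succ) ∈ closePairs S' (4 * #S' / m)} := by
  set p : Fin m → Prop := fun i ↦ (f i.castSucc, f i.succ) ∈ closePairs S (4 * #S / m)
  set q : Fin m → Prop := fun i ↦ (g i.castSucc, g i.succ) ∈ closePairs S' (4 * #S' / m)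
  have hp : 4 * #{i | ¬ p i} ≤ m := mul_card_notMem_closePairs_le hf hfS 4
  have hq : 4 * #{i | ¬ q i} ≤ m := mul_card_notMem_closePairs_le hg hgS' 4
  have hpq : #{i | ¬ (p i ∧ q i)} ≤ #{i | ¬ p i} + #{i | ¬ q i} := by
    simp only [not_and_or, filter_or]
    exact card_union_le _ _
  have htotal : #{i | p i ∧ q i} + #{i | ¬ (p i ∧ q i)} = m := by
    rw [card_filter_add_card_filter_not, card_univ, Fintype.card_fin]
  lia

end ClosePairs

lemma card_le_add_one_of_pairwise_one_le_abs_sub {S : Finset ℝ} {L : ℝ} (hS : S.Nonempty)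
    (hsep : (S : Set ℝ).Pairwise fun a b ↦ 1 ≤ |a - b|)
    (hL : ∀ a ∈ S, ∀ b ∈ S, a - b ≤ L) : (#S : ℝ) ≤ L + 1 := by
  set l := S.min' hS
  have hl : l ∈ S := S.min'_mem hS
  have hfloor : 0 ≤ ⌊L⌋ := Int.floor_nonneg.2 (by simpa only [sub_self] using hL l hl l hl)
  have hcard : #S ≤ #(Icc 0 ⌊L⌋) := by
    refine card_le_card_of_injOn (fun a ↦ ⌊a - l⌋) (fun a ha ↦ mem_coe.2 (mem_Icc.2
      ⟨Int.floor_nonneg.2 (sub_nonneg.2 (S.min'_le a ha)), Int.floor_mono (hL a ha l hl)⟩))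
      fun a ha b hb hab ↦ ?_
    by_contra hne
    have hlt := Int.abs_sub_lt_one_of_floor_eq_floor hab
    rw [sub_sub_sub_cancel_right] at hlt
    exact (hsep ha hb hne).not_gt hlt
  have hcard' : (#S : ℤ) ≤ ⌊L⌋ + 1 := by
    rw [Int.card_Icc] at hcard
    lia
  calc (#S : ℝ) ≤ ⌊L⌋ + 1 := by exact_mod_cast hcard'
    _ ≤ L + 1 := by gcongr; exact Int.floor_le L

section ApproximateProducts

variable {m : ℕ} {e : Fin (m + 1) → ℝ} {A : Finset ℝ} {p : ℝ → Fin (m + 1) → ℝ} {θ : ℝ}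

lemma strictMono_of_abs_sub_mul_le {ι : Type*} [Preorder ι] {e f : ι → ℝ} {a θ : ℝ}
    (he : ∀ i j, i < j → e i + 1 ≤ e j) (ha : 2 * θ < a)
    (hf : ∀ i, |f i - a * e i| ≤ θ) : StrictMono f := by
  intro i j hij
  have hθ : 0 ≤ θ := (abs_nonneg _).trans (hf i)
  have hstep : a ≤ a * (e j - e i) :=
    le_mul_of_one_le_right (by linarith) (by linarith [he i j hij])
  linarith [abs_le.1 (hf i), abs_le.1 (hf j)]

lemma abs_sub_le_of_abs_sub_mul_le {a a' c d c' d' u v θ : ℝ} (hcd : d - c = d' - c')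
    (hgap : 1 ≤ d - c) (hu : |u - a * c| ≤ θ) (hv : |v - a * d| ≤ θ)
    (hu' : |u - a' * c'| ≤ θ) (hv' : |v - a' * d'| ≤ θ) : |a - a'| ≤ 4 * θ := by
  have hmul : a' * (d - c) = a' * d' - a' * c' := by rw [hcd]; ring
  rw [abs_le] at hu hv hu' hv'
  calc |a - a'| ≤ |a - a'| * (d - c) := le_mul_of_one_le_right (abs_nonneg _) hgap
    _ = |(a - a') * (d - c)| := by rw [abs_mul, abs_of_pos (zero_lt_one.trans_le hgap)]
    _ ≤ 4 * θ := abs_le.2 ⟨by linarith, by linarith⟩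

/-- Sends a triple `(a, b, i)` to the pair of sums `b + eᵢ, b + eᵢ₊₁` and the pair of approximate
products `p a i, p a (i + 1)` of `a` with `eᵢ, eᵢ₊₁`; the theorem comes from counting the triples
whose two pairs are close. -/
def sumProductPairs (e : Fin (m + 1) → ℝ) (p : ℝ → Fin (m + 1) → ℝ) (t : ℝ × ℝ × Fin m) :
    (ℝ × ℝ) × (ℝ × ℝ) :=
  ((t.2.1 + e t.2.2.castSucc, t.2.1 + e t.2.2.succ), (p t.1 t.2.2.castSucc, p t.1 t.2.2.succ))

lemma abs_sub_le_of_sumProductPairs_eq (he : ∀ i j, i < j → e i + 1 ≤ e j)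
    (hp : ∀ a ∈ A, ∀ i, |p a i - a * e i| ≤ θ) {t t' : ℝ × ℝ × Fin m} (ht : t.1 ∈ A)
    (ht' : t'.1 ∈ A) (h : sumProductPairs e p t = sumProductPairs e p t') :
    |t.1 - t'.1| ≤ 4 * θ := by
  simp only [sumProductPairs, Prod.mk.injEq] at h
  obtain ⟨⟨hc, hd⟩, hu, hv⟩ := h
  have hgap := he _ _ t.2.2.castSucc_lt_succ
  exact abs_sub_le_of_abs_sub_mul_le (c := e t.2.2.castSucc) (d := e t.2.2.succ)
    (c' := e t'.2.2.castSucc) (d' := e t'.2.2.succ) (by linarith) (by linarith)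
    (hp _ ht _) (hp _ ht _) (hu ▸ hp _ ht' _) (hv ▸ hp _ ht' _)

lemma eq_of_sumProductPairs_eq {t t' : ℝ × ℝ × Fin m} (hinj : (p t.1).Injective)
    (ha : t.1 = t'.1) (h : sumProductPairs e p t = sumProductPairs e p t') : t = t' := by
  obtain ⟨a, b, i⟩ := t
  obtain ⟨a', b', i'⟩ := t'
  obtain rfl : a = a' := ha
  simp only [sumProductPairs, Prod.mk.injEq] at h
  obtain rfl : i = i' := Fin.castSucc_injective m (hinj h.2.1)
  rw [add_right_cancel h.1.1]

lemma card_filter_sumProductPairs_eq_le (hA : (A : Set ℝ).Pairwise fun a a' ↦ 1 ≤ |a - a'|)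
    (he : ∀ i j, i < j → e i + 1 ≤ e j) (hθ : ∀ a ∈ A, 2 * θ < a)
    (hp : ∀ a ∈ A, ∀ i, |p a i - a * e i| ≤ θ) {T : Finset (ℝ × ℝ × Fin m)}
    (hT : ∀ t ∈ T, t.1 ∈ A) {z : (ℝ × ℝ) × (ℝ × ℝ)} (hz : z ∈ T.image (sumProductPairs e p)) :
    (#{t ∈ T | sumProductPairs e p t = z} : ℝ) ≤ 4 * θ + 1 := by
  set fiber := {t ∈ T | sumProductPairs e p t = z}
  have hmem : ∀ t ∈ fiber, t.1 ∈ A := fun t ht ↦ hT t (mem_filter.1 ht).1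
  have heq : ∀ t ∈ fiber, ∀ t' ∈ fiber, sumProductPairs e p t = sumProductPairs e p t' :=
    fun t ht t' ht' ↦ (mem_filter.1 ht).2.trans (mem_filter.1 ht').2.symm
  have hinj : Set.InjOn Prod.fst (fiber : Set (ℝ × ℝ × Fin m)) := fun t ht t' ht' ha ↦
    eq_of_sumProductPairs_eq
      (strictMono_of_abs_sub_mul_le he (hθ _ (hmem t ht)) (hp _ (hmem t ht))).injective
      ha (heq t ht t' ht')
  rw [← card_image_of_injOn hinj]
  have hsub : fiber.image Prod.fst ⊆ A := image_subset_iff.2 hmem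
  refine card_le_add_one_of_pairwise_one_le_abs_sub ?_ (hA.mono (coe_subset.2 hsub)) ?_
  · obtain ⟨t, ht, htz⟩ := mem_image.1 hz
    exact ⟨t.1, mem_image_of_mem _ (mem_filter.2 ⟨ht, htz⟩)⟩
  · simp only [forall_mem_image]
    exact fun t ht t' ht' ↦ (le_abs_self _).trans
      (abs_sub_le_of_sumProductPairs_eq he hp (hmem t ht) (hmem t' ht') (heq t ht t' ht'))

/-- The triples `(a, b, i)` for which both the pair of sums and the pair of approximate products
are close. The thresholds are four times the average gap, so that each of the two conditions fails
for at most a quarter of the indices `i`. -/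
noncomputable def closeTriples (A B X P : Finset ℝ) (e : Fin (m + 1) → ℝ)
    (p : ℝ → Fin (m + 1) → ℝ) : Finset (ℝ × ℝ × Fin m) :=
  {t ∈ A ×ˢ B ×ˢ univ |
    sumProductPairs e p t ∈ closePairs X (4 * #X / m) ×ˢ closePairs P (4 * #P / m)}

variable {B X P : Finset ℝ}

lemma card_mul_card_mul_le_two_mul_card_closeTriples (he : StrictMono e)
    (hp : ∀ a ∈ A, StrictMono (p a)) (hX : ∀ b ∈ B, ∀ i, b + e i ∈ X)
    (hP : ∀ a ∈ A, ∀ i, p a i ∈ P) :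
    #A * #B * m ≤ 2 * #(closeTriples A B X P e p) := by
  simp only [closeTriples, card_filter, sum_product, mul_sum]
  rw [mul_assoc, ← smul_eq_mul, ← smul_eq_mul (a := #B)]
  refine card_nsmul_le_sum _ _ _ fun a ha ↦ card_nsmul_le_sum _ _ _ fun b hb ↦ ?_
  rw [← mul_sum, ← card_filter]
  simpa only [sumProductPairs, mem_product] using
    le_two_mul_card_mem_closePairs (he.const_add b) (hX b hb) (hp a ha) (hP a ha)

lemma card_closeTriples_le (hA : (A : Set ℝ).Pairwise fun a a' ↦ 1 ≤ |a - a'|)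
    (he : ∀ i j, i < j → e i + 1 ≤ e j) (hθ0 : 0 ≤ θ) (hθ : ∀ a ∈ A, 2 * θ < a)
    (hp : ∀ a ∈ A, ∀ i, |p a i - a * e i| ≤ θ) :
    (#(closeTriples A B X P e p) : ℝ) ≤
      (4 * θ + 1) * (#(closePairs X (4 * #X / m)) * #(closePairs P (4 * #P / m))) := by
  set T := closeTriples A B X P e p
  have hT : ∀ t ∈ T, t.1 ∈ A := fun t ht ↦ (mem_product.1 (mem_filter.1 ht).1).1
  have himage : T.image (sumProductPairs e p) ⊆
      closePairs X (4 * #X / m) ×ˢ closePairs P (4 * #P / m) :=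
    image_subset_iff.2 fun t ht ↦ (mem_filter.1 ht).2
  have hcount : #T ≤ ⌊4 * θ + 1⌋₊ *
      (#(closePairs X (4 * #X / m)) * #(closePairs P (4 * #P / m))) := by
    rw [← card_product]
    refine (card_le_mul_card_image T _ fun z hz ↦ Nat.le_floor ?_).trans
      (Nat.mul_le_mul_left _ (card_le_card himage))
    exact card_filter_sumProductPairs_eq_le hA he hθ hp hT hz
  calc (#T : ℝ) ≤ ⌊4 * θ + 1⌋₊ *
        (#(closePairs X (4 * #X / m)) * #(closePairs P (4 * #P / m))) := by exact_mod_cast hcount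
    _ ≤ _ := by gcongr; exact Nat.floor_le (by positivity)

theorem card_mul_card_mul_pow_three_le (hA : (A : Set ℝ).Pairwise fun a a' ↦ 1 ≤ |a - a'|)
    (he : ∀ i j, i < j → e i + 1 ≤ e j) (hθ0 : 0 ≤ θ) (hθ : ∀ a ∈ A, 2 * θ < a)
    (hp : ∀ a ∈ A, ∀ i, |p a i - a * e i| ≤ θ) (hX : ∀ b ∈ B, ∀ i, b + e i ∈ X)
    (hP : ∀ a ∈ A, ∀ i, p a i ∈ P) :
    (#A * #B * m ^ 3 : ℝ) ≤ 32 * (4 * θ + 1) * #X ^ 2 * #P ^ 2 := by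
  have he_mono : StrictMono e := fun i j hij ↦ (lt_add_one _).trans_le (he i j hij)
  have hp_mono : ∀ a ∈ A, StrictMono (p a) := fun a ha ↦
    strictMono_of_abs_sub_mul_le he (hθ a ha) (hp a ha)
  have hlower : (#A * #B * m : ℝ) ≤ 2 * #(closeTriples A B X P e p) := by
    exact_mod_cast card_mul_card_mul_le_two_mul_card_closeTriples he_mono hp_mono hX hP
  have hupper := card_closeTriples_le (B := B) (X := X) (P := P) hA he hθ0 hθ hp
  have hclose : ∀ S : Finset ℝ, (m * #(closePairs S (4 * #S / m)) : ℝ) ≤ 4 * #S ^ 2 := fun S ↦ by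
    exact_mod_cast mul_card_closePairs_le S 4 m
  set QX := closePairs X (4 * #X / m)
  set QP := closePairs P (4 * #P / m)
  calc (#A * #B * m ^ 3 : ℝ) = #A * #B * m * m ^ 2 := by ring
    _ ≤ 2 * ((4 * θ + 1) * (#QX * #QP)) * m ^ 2 :=
      mul_le_mul_of_nonneg_right (by linarith) (by positivity)
    _ = 2 * (4 * θ + 1) * ((m * #QX) * (m * #QP)) := by ring
    _ ≤ 2 * (4 * θ + 1) * ((4 * #X ^ 2) * (4 * #P ^ 2)) := by
      have := mul_le_mul (hclose X) (hclose P) (by positivity) (by positivity)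
      gcongr 2 * (4 * θ + 1) * ?_
    _ = 32 * (4 * θ + 1) * #X ^ 2 * #P ^ 2 := by ring

end ApproximateProducts

theorem card_mul_card_mul_card_pow_three_le {A B C : Finset ℝ} {p : ℝ → ℝ → ℝ} {θ : ℝ}
    (hA : (A : Set ℝ).Pairwise fun a a' ↦ 1 ≤ |a - a'|)
    (hC : (C : Set ℝ).Pairwise fun c c' ↦ 1 ≤ |c - c'|) (hcard : 1 < #C) (hθ0 : 0 ≤ θ)
    (hθ : ∀ a ∈ A, 2 * θ < a) (hp : ∀ a ∈ A, ∀ c ∈ C, |p a c - a * c| ≤ θ) :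
    (#A * #B * #C ^ 3 : ℝ) ≤ 256 * (4 * θ + 1) * #(B + C) ^ 2 * #(image₂ p A C) ^ 2 := by
  obtain ⟨m, hm⟩ : ∃ m, #C = m + 1 := Nat.exists_eq_succ_of_ne_zero (by lia)
  set e := C.orderEmbOfFin hm
  have heC : ∀ i, e i ∈ C := C.orderEmbOfFin_mem hm
  have he : ∀ i j, i < j → e i + 1 ≤ e j := fun i j hij ↦ by
    have hlt : e i < e j := e.strictMono hij
    have hsep : 1 ≤ |e j - e i| := hC (heC j) (heC i) hlt.ne'
    rw [abs_of_pos (sub_pos.2 hlt)] at hsep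
    linarith
  have hbound : (#A * #B * m ^ 3 : ℝ) ≤
      32 * (4 * θ + 1) * #(B + C) ^ 2 * #(image₂ p A C) ^ 2 :=
    card_mul_card_mul_pow_three_le hA he hθ0 hθ (fun a ha i ↦ hp a ha _ (heC i))
      (fun b hb i ↦ add_mem_add hb (heC i)) fun a ha i ↦ mem_image₂_of_mem ha (heC i)
  have hCm : (#C : ℝ) ≤ 2 * m := by
    exact_mod_cast (by lia : #C ≤ 2 * m)
  calc (#A * #B * #C ^ 3 : ℝ) ≤ #A * #B * (2 * m) ^ 3 := by gcongr
    _ = 8 * (#A * #B * m ^ 3) := by ring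
    _ ≤ 8 * (32 * (4 * θ + 1) * #(B + C) ^ 2 * #(image₂ p A C) ^ 2) := by gcongr
    _ = 256 * (4 * θ + 1) * #(B + C) ^ 2 * #(image₂ p A C) ^ 2 := by ring

lemma abs_add_mul_add_sub_mul_le {a b d d' η M : ℝ} (ha : 0 < a) (hb : 0 < b)
    (hab : a ≤ M * b) (hba : b ≤ M * a) (hη : η ≤ a * b) (hd : |d| ≤ η / a)
    (hd' : |d'| ≤ η / b) : |(a + d) * (b + d') - a * b| ≤ (2 * M + 1) * η := by
  rw [le_div_iff₀ ha] at hd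
  rw [le_div_iff₀ hb] at hd'
  have hη0 : 0 ≤ η := (mul_nonneg (abs_nonneg d) ha.le).trans hd
  have hM : 0 ≤ M := (pos_of_mul_pos_left (ha.trans_le hab) hb.le).le
  have hleft : a * |d'| ≤ M * η :=
    calc a * |d'| ≤ M * b * |d'| := by gcongr
      _ = M * (|d'| * b) := by ring
      _ ≤ M * η := by gcongr
  have hright : |d| * b ≤ M * η :=
    calc |d| * b ≤ |d| * (M * a) := by gcongr
      _ = M * (|d| * a) := by ring
      _ ≤ M * η := by gcongr
  have hboth : |d| * |d'| ≤ η := by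
    refine le_of_mul_le_mul_right ?_ (mul_pos ha hb)
    calc |d| * |d'| * (a * b) = |d| * a * (|d'| * b) := by ring
      _ ≤ η * η := by gcongr
      _ ≤ η * (a * b) := by gcongr
  calc |(a + d) * (b + d') - a * b| = |a * d' + d * b + d * d'| := by congr 1; ring
    _ ≤ |a * d'| + |d * b| + |d * d'| := abs_add_three _ _ _
    _ = a * |d'| + |d| * b + |d| * |d'| := by
      rw [abs_mul, abs_mul, abs_mul, abs_of_pos ha, abs_of_pos hb]
    _ ≤ (2 * M + 1) * η := by linarith

theorem card_pow_five_le {A : Finset ℝ} {x η : ℝ} (hcard : 1 < #A) (hη : 1 ≤ η)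
    (hx : 10 * η < x) (hA : ∀ a ∈ A, x ≤ a ∧ a < 2 * x)
    (hsep : ∀ a ∈ A, ∀ b ∈ A, a ≠ b → 1 ≤ |a - b|) {δ δ' : ℝ → ℝ → ℝ}
    (hδ : ∀ a ∈ A, ∀ b ∈ A, |δ a b| < η / a ∧ |δ' a b| < η / b) :
    (#A : ℝ) ^ 5 ≤ 5376 * η * #(A + A) ^ 2 *
      #(image₂ (fun a b ↦ (a + δ a b) * (b + δ' a b)) A A) ^ 2 := by
  have happrox : ∀ a ∈ A, ∀ b ∈ A, |(a + δ a b) * (b + δ' a b) - a * b| ≤ 5 * η := by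
    intro a ha b hb
    obtain ⟨hxa, hax⟩ := hA a ha
    obtain ⟨hxb, hbx⟩ := hA b hb
    obtain ⟨hd, hd'⟩ := hδ a ha b hb
    have hηab : η ≤ a * b := (by linarith : η ≤ a).trans
      (le_mul_of_one_le_right (by linarith) (by linarith))
    linarith [abs_add_mul_add_sub_mul_le (M := 2) (by linarith) (by linarith) (by linarith)
      (by linarith) hηab hd.le hd'.le]
  have hsep' : (A : Set ℝ).Pairwise fun a b ↦ 1 ≤ |a - b| := fun a ha b hb ↦ hsep a ha b hb
  set P := image₂ (fun a b ↦ (a + δ a b) * (b + δ' a b)) A A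
  calc (#A : ℝ) ^ 5 = #A * #A * #A ^ 3 := by ring
    _ ≤ 256 * (4 * (5 * η) + 1) * #(A + A) ^ 2 * #P ^ 2 :=
      card_mul_card_mul_card_pow_three_le hsep' hsep' hcard (by linarith)
        (fun a ha ↦ by linarith [(hA a ha).1]) happrox
    _ ≤ 256 * (21 * η) * #(A + A) ^ 2 * #P ^ 2 := by gcongr; linarith
    _ = 5376 * η * #(A + A) ^ 2 * #P ^ 2 := by ring

theorem stmt17_general {ε x : ℝ} (hε1 : ε ≤ 1) {A : Finset ℝ} (hcard : 1 < #A)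
    (hx : 10 * (#A : ℝ) ^ (1 - ε) < x) (hA : ∀ a ∈ A, x ≤ a ∧ a < 2 * x)
    (hsep : ∀ a ∈ A, ∀ b ∈ A, a ≠ b → 1 ≤ |a - b|) {δ δ' : ℝ → ℝ → ℝ}
    (hδ : ∀ a ∈ A, ∀ b ∈ A,
      |δ a b| < (#A : ℝ) ^ (1 - ε) / a ∧ |δ' a b| < (#A : ℝ) ^ (1 - ε) / b) :
    (#A : ℝ) ^ (2 + ε / 2) ≤
      74 * (#(image₂ (fun a b ↦ (a + δ a b) * (b + δ' a b)) A A) * #(A + A)) := by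
  have hn : (1 : ℝ) ≤ #A := by exact_mod_cast hcard.le
  have hη : 1 ≤ (#A : ℝ) ^ (1 - ε) := Real.one_le_rpow hn (by linarith)
  have hpow : ((#A : ℝ) ^ (2 + ε / 2)) ^ 2 * (#A : ℝ) ^ (1 - ε) = (#A : ℝ) ^ 5 := by
    rw [← Real.rpow_mul_natCast (by positivity), ← Real.rpow_add (by positivity),
      ← Real.rpow_natCast]
    congr 1
    push_cast
    ring
  have hfive := card_pow_five_le hcard hη hx hA hsep hδ
  set η := (#A : ℝ) ^ (1 - ε)
  set P := image₂ (fun a b ↦ (a + δ a b) * (b + δ' a b)) A A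
  refine le_of_sq_le_sq (le_of_mul_le_mul_right ?_ (zero_lt_one.trans_le hη)) (by positivity)
  calc ((#A : ℝ) ^ (2 + ε / 2)) ^ 2 * η ≤ 5376 * η * #(A + A) ^ 2 * #P ^ 2 := hpow.trans_le hfive
    _ ≤ 5476 * η * #(A + A) ^ 2 * #P ^ 2 := by gcongr; norm_num
    _ = (74 * (#P * #(A + A) : ℝ)) ^ 2 * η := by ring

lemma eventually_mul_rpow_one_sub_lt {ε : ℝ} (hε : 0 < ε) (M : ℝ) :
    ∀ᶠ n : ℕ in Filter.atTop, M * (n : ℝ) ^ (1 - ε) < n := by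
  have htendsto := (tendsto_rpow_atTop hε).comp tendsto_natCast_atTop_atTop
  filter_upwards [htendsto.eventually_gt_atTop M, Filter.eventually_gt_atTop 0] with n hM hn
  have hn0 : (0 : ℝ) < n := by exact_mod_cast hn
  calc M * (n : ℝ) ^ (1 - ε) < (n : ℝ) ^ ε * (n : ℝ) ^ (1 - ε) := by
        gcongr
        exact hM
    _ = n := by rw [← Real.rpow_add hn0, add_sub_cancel, Real.rpow_one]

lemma eventually_rpow_div_log_rpow_le_rpow {s t r : ℝ} (hst : s ≤ t) (hr : 0 ≤ r) :
    ∀ᶠ n : ℕ in Filter.atTop, (n : ℝ) ^ s / Real.log n ^ r ≤ (n : ℝ) ^ t := by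
  filter_upwards [tendsto_natCast_atTop_atTop.eventually_ge_atTop (Real.exp 1)] with n hn
  have hn1 : 1 ≤ (n : ℝ) := (Real.one_le_exp zero_le_one).trans hn
  have hlog : 1 ≤ Real.log n := (Real.le_log_iff_exp_le (by positivity)).2 hn
  exact (div_le_self (by positivity) (Real.one_le_rpow hlog hr)).trans
    (Real.rpow_le_rpow_of_exponent_le hn1 hst)

/-- Dyadic-interval case of the incidence argument: if the 1-separated set `A`
of `n` positive reals lies in a single dyadic interval `[x, 2x)` with `x ≥ n`,
then the perturbed product set `P` satisfies
`|P| · |A+A| ≫ n^{2 + 13ε/36} / (log n)^{2/3}`. -/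
theorem stmt17 (ε : ℝ) (hε0 : 0 < ε) (hε1 : ε ≤ 1) :
    ∃ c : ℝ, 0 < c ∧ ∃ n₀ : ℕ, ∀ (A : Finset ℝ) (n : ℕ) (x : ℝ),
      A.card = n → n₀ < n → (n : ℝ) ≤ x →
      (∀ a ∈ A, x ≤ a ∧ a < 2 * x) →
      (∀ a ∈ A, ∀ b ∈ A, a ≠ b → 1 ≤ |a - b|) →
      ∀ δ δ' : ℝ → ℝ → ℝ,
        (∀ a ∈ A, ∀ b ∈ A,
          |δ a b| < (n : ℝ) ^ (1 - ε) / a ∧ |δ' a b| < (n : ℝ) ^ (1 - ε) / b) →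
        ∀ P : Finset ℝ,
          P = (A ×ˢ A).image (fun p => (p.1 + δ p.1 p.2) * (p.2 + δ' p.1 p.2)) →
          c * (n : ℝ) ^ (2 + 13 * ε / 36) / (Real.log n) ^ ((2:ℝ)/3)
            ≤ (P.card : ℝ) * ((A + A).card : ℝ) := by
  have hlog := eventually_rpow_div_log_rpow_le_rpow
    (by linarith : 2 + 13 * ε / 36 ≤ 2 + ε / 2) (by norm_num : (0 : ℝ) ≤ 2 / 3)
  obtain ⟨n₀, hn₀⟩ := Filter.eventually_atTop.1
    ((Filter.eventually_gt_atTop 1).and ((eventually_mul_rpow_one_sub_lt hε0 10).and hlog))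
  refine ⟨1 / 74, by norm_num, n₀, ?_⟩
  rintro A _ x rfl hn hnx hA hsep δ δ' hδ _ rfl
  obtain ⟨hcard, hlarge, hlog⟩ := hn₀ _ hn.le
  rw [mul_div_assoc, one_div_mul_eq_div, div_le_iff₀' (by norm_num)]
  exact hlog.trans (stmt17_general hε1 hcard (hlarge.trans_le hnx) hA hsep hδ)
end
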